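/- Let u be subharmonic in ℂ of finite order ρ(u), let D be a component of {z : u(z) > 0} with angular measure function θ*(r), and for ε > 0 let F = {r ≥ 1 : θ*(r) ≤ επ}. Then limsup_{R→∞} (1/log R) ∫_{F ∩ [1,R]} dt/t ≤ ε·ρ(u). -/

import Mathlib

open scoped Classical

open MeasureTheory Real Filter ENNReal

/-- `u` is subharmonic on `ℂ`: upper semicontinuous and satisfying the sub-mean value
inequality on all circles. -/
def IsSubharmonic (u : ℂ → ℝ) : Prop :=
  UpperSemicontinuous u ∧
  ∀ z : ℂ, ∀ r : ℝ, 0 < r →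
    u z ≤ (1 / (2 * π)) * ∫ θ in (0:ℝ)..(2 * π), u (z + r * Complex.exp (θ * Complex.I))

/-- The angular measure `θ*_D(r)` of `{θ ∈ [0,2π) : r e^{iθ} ∈ D}`, equal to `∞`
if the entire circle `|z| = r` lies in `D`. -/
noncomputable def thetaStar (D : Set ℂ) (r : ℝ) : ℝ≥0∞ :=
  if ∀ θ : ℝ, (r * Complex.exp (θ * Complex.I) : ℂ) ∈ D then ⊤
  else volume {θ ∈ Set.Ico (0:ℝ) (2 * π) | (r * Complex.exp (θ * Complex.I) : ℂ) ∈ D}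

/-- The order of growth of a subharmonic function `u`,
`ρ(u) = limsup_{r→∞} log M(r,u)/log r` where `M(r,u) = max_{|z|=r} u(z)`. -/
noncomputable def subharmonicOrder (u : ℂ → ℝ) : ℝ≥0∞ :=
  Filter.limsup (fun r : ℝ =>
    ENNReal.ofReal (Real.log (sSup (u '' Metric.sphere (0:ℂ) r)) / Real.log r)) Filter.atTop

section

open Set Topology

lemma hasDerivAt_intervalIntegral_of_continuousOn {f f' : ℝ → ℝ → ℝ} {U : Set ℝ} (hU : IsOpen U)
    (hf : ∀ t ∈ U, ∀ θ, HasDerivAt (fun s => f s θ) (f' t θ) t)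
    (hc : ∀ t ∈ U, Continuous (f t))
    (hc' : ContinuousOn (Function.uncurry f') (U ×ˢ univ)) {t : ℝ} (ht : t ∈ U) (a b : ℝ) :
    HasDerivAt (fun s => ∫ θ in a..b, f s θ) (∫ θ in a..b, f' t θ) t := by
  obtain ⟨r, hr, hrU⟩ := Metric.nhds_basis_closedBall.mem_iff.1 (hU.mem_nhds ht)
  have hK : IsCompact (Metric.closedBall t r ×ˢ uIcc a b) :=
    (isCompact_closedBall t r).prod isCompact_uIcc
  obtain ⟨C, hC⟩ := hK.exists_bound_of_continuousOn
    (hc'.mono (prod_mono hrU (subset_univ _)))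
  have hct : Continuous (f' t) := by
    rw [← continuousOn_univ]
    exact hc'.comp (f := fun θ => (t, θ)) (by fun_prop) fun θ _ => ⟨ht, mem_univ _⟩
  refine (intervalIntegral.hasDerivAt_integral_of_dominated_loc_of_deriv_le (bound := fun _ => C)
    (Metric.closedBall_mem_nhds t hr) ?_ ((hc t ht).intervalIntegrable _ _)
    hct.aestronglyMeasurable ?_ (by simp) ?_).2
  · filter_upwards [hU.mem_nhds ht] with s hs using (hc s hs).aestronglyMeasurable
  · exact Eventually.of_forall fun θ hθ s hs => hC (s, θ) ⟨hs, uIoc_subset_uIcc hθ⟩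
  · exact Eventually.of_forall fun θ _ s hs => hf s (hrU hs) θ

/-- A product of a continuous function and a differentiable one, both vanishing at `x`,
has derivative zero at `x`. -/
lemma hasDerivAt_mul_zero {q f : ℝ → ℝ} {x f' : ℝ} (hq : ContinuousAt q x) (hq0 : q x = 0)
    (hf : HasDerivAt f f' x) (hf0 : f x = 0) : HasDerivAt (fun y => q y * f y) 0 x := by
  rw [hasDerivAt_iff_isLittleO]
  have h1 : q =o[𝓝 x] (fun _ => (1 : ℝ)) := by
    rw [Asymptotics.isLittleO_one_iff]
    simpa [hq0] using hq.tendsto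
  have h2 : f =O[𝓝 x] fun y => y - x := by simpa [hf0] using hf.isBigO_sub
  simpa [hf0, hq0] using h1.mul_isBigO h2

/-- Wirtinger's inequality for a function vanishing at the endpoints, with the constant governed
by the measure of the set where the function does not vanish. -/
lemma wirtinger_of_support {f f' : ℝ → ℝ} (hf : ∀ x, HasDerivAt f (f' x) x) (hf' : Continuous f')
    {a b k : ℝ} (hab : a ≤ b) (hk : 0 ≤ k) (ha : f a = 0) (hb : f b = 0)
    (hm : k * ∫ x in a..b, indicator {x | f x ≠ 0} 1 x < π) :
    k ^ 2 * ∫ x in a..b, f x ^ 2 ≤ ∫ x in a..b, f' x ^ 2 := by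
  have hfc : Continuous f := continuous_iff_continuousAt.2 fun x => (hf x).continuousAt
  have hop : IsOpen {x | f x ≠ 0} := isOpen_ne_fun hfc continuous_const
  set χ : ℝ → ℝ := indicator {x | f x ≠ 0} 1 with hχ
  have hχm : Measurable χ := measurable_one.indicator hop.measurableSet
  have hχ0 : ∀ x, 0 ≤ χ x := fun x => indicator_nonneg (by simp) x
  have hχ1 : ∀ x, ‖χ x‖ ≤ 1 := fun x => by
    rw [Real.norm_eq_abs, abs_of_nonneg (hχ0 x)]
    exact indicator_le_self' (by simp) x
  have hχi : ∀ c d : ℝ, IntervalIntegrable χ volume c d := fun c d =>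
    (intervalIntegrable_const (c := (1 : ℝ))).mono_fun hχm.aestronglyMeasurable
      (Eventually.of_forall fun x => by simpa using hχ1 x)
  set τ : ℝ → ℝ := fun x => ∫ y in a..x, χ y with hτ
  have hτc : Continuous τ := intervalIntegral.continuous_primitive hχi a
  set L := ∫ x in a..b, χ x with hL
  set η := (π - k * L) / 2 with hη
  have hη0 : 0 < η := by simp only [hη]; linarith
  have hτ0 : ∀ x ∈ Icc a b, 0 ≤ τ x := fun x hx =>
    intervalIntegral.integral_nonneg hx.1 fun y _ => hχ0 y
  have hτL : ∀ x ∈ Icc a b, τ x ≤ L := fun x hx => by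
    have h1 : τ x + ∫ y in x..b, χ y = L :=
      intervalIntegral.integral_add_adjacent_intervals (hχi _ _) (hχi _ _)
    have h2 : 0 ≤ ∫ y in x..b, χ y := intervalIntegral.integral_nonneg hx.2 fun y _ => hχ0 y
    linarith
  set ω : ℝ → ℝ := fun x => k * τ x + η with hω
  have hωc : Continuous ω := by fun_prop
  have hs : ∀ x ∈ Icc a b, 0 < Real.sin (ω x) := fun x hx => by
    apply Real.sin_pos_of_pos_of_lt_pi
    · have := mul_nonneg hk (hτ0 x hx)
      simp only [hω]; linarith
    · have := mul_le_mul_of_nonneg_left (hτL x hx) hk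
      simp only [hω]; linarith
  set p : ℝ → ℝ := fun x => k * (Real.cos (ω x) / Real.sin (ω x)) with hp
  have hpc : ∀ x ∈ Icc a b, ContinuousAt p x := fun x hx => by
    have := (hs x hx).ne'
    exact continuousAt_const.mul
      ((Real.continuous_cos.comp hωc).continuousAt.div
        (Real.continuous_sin.comp hωc).continuousAt this)
  set g' : ℝ → ℝ := fun x => if f x = 0 then 0 else 2 * p x * f x * f' x
    - (k ^ 2 + p x ^ 2) * f x ^ 2 with hg'
  have hG : ∀ x ∈ Ioo a b, HasDerivAt (fun x => (p x * f x) * f x) (g' x) x := by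
    intro x hx
    have hx' := Ioo_subset_Icc_self hx
    by_cases h0 : f x = 0
    · simp only [hg', h0, if_true]
      exact hasDerivAt_mul_zero ((hpc x hx').mul hfc.continuousAt) (by simp [h0]) (hf x) h0
    · have hev : χ =ᶠ[𝓝 x] fun _ => 1 := by
        filter_upwards [hop.mem_nhds h0] with y hy
        simp only [ne_eq] at hy
        simp [hχ, hy]
      have hτd : HasDerivAt τ 1 x := by
        have := intervalIntegral.integral_hasDerivAt_right (hχi a x)
          hχm.stronglyMeasurable.stronglyMeasurableAtFilter
          (continuousAt_const.congr hev.symm)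
        simpa [hev.eq_of_nhds] using this
      have hωd : HasDerivAt ω k x := ((hτd.const_mul k).add_const η).congr_deriv (mul_one k)
      have hsx := (hs x hx').ne'
      have hpd := ((hωd.cos.div hωd.sin hsx).const_mul k)
      refine ((hpd.mul (hf x)).mul (hf x)).congr_deriv ?_
      simp only [hg', h0, if_false, hp]
      field_simp
      have := Real.sin_sq_add_cos_sq (ω x)
      simp only [Pi.div_apply, Pi.mul_apply]
      field_simp
      ring
  have key : (p b * f b) * f b - (p a * f a) * f a ≤
      ∫ x in a..b, (f' x ^ 2 - k ^ 2 * f x ^ 2) :=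
    intervalIntegral.sub_le_integral_of_hasDeriv_right_of_le (g' := g')
    (φ := fun x => f' x ^ 2 - k ^ 2 * f x ^ 2) hab
    (fun x hx => (((hpc x hx).mul hfc.continuousAt).mul hfc.continuousAt).continuousWithinAt)
    (fun x hx => (hG x hx).hasDerivWithinAt)
    (Continuous.integrableOn_Icc (by fun_prop)) (fun x _ => by
      simp only [hg']
      split_ifs with h0
      · simp only [h0]; nlinarith [sq_nonneg (f' x)]
      · nlinarith [sq_nonneg (f' x - p x * f x)])
  rw [intervalIntegral.integral_sub (Continuous.intervalIntegrable (by fun_prop) _ _)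
    (Continuous.intervalIntegrable (by fun_prop) _ _), intervalIntegral.integral_const_mul] at key
  simp only [ha, hb, mul_zero, sub_self] at key
  linarith

lemma wirtinger_of_periodic {f f' : ℝ → ℝ} (hf : ∀ x, HasDerivAt f (f' x) x)
    (hf' : Continuous f') {T : ℝ} (hT : 0 ≤ T) (hper : Function.Periodic f T) {x₀ k : ℝ}
    (hk : 0 ≤ k) (h0 : f x₀ = 0)
    (hm : k * ∫ x in 0..T, indicator {x | f x ≠ 0} 1 x < π) :
    k ^ 2 * ∫ x in 0..T, f x ^ 2 ≤ ∫ x in 0..T, f' x ^ 2 := by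
  have hper' : Function.Periodic f' T := fun x => by
    have h1 : HasDerivAt (fun y => f (y + T)) (f' (x + T)) x := (hf (x + T)).comp_add_const x T
    simp only [hper _] at h1
    exact h1.unique (hf x)
  have hs : ∀ g : ℝ → ℝ, Function.Periodic g T → ∫ x in 0..T, g x = ∫ x in x₀..x₀ + T, g x :=
    fun g hg => by simpa using hg.intervalIntegral_add_eq 0 x₀
  rw [hs _ fun x => by simp [indicator, hper x]] at hm
  rw [hs _ fun x => by rw [hper x], hs _ fun x => by rw [hper' x]]
  exact wirtinger_of_support hf hf' (by linarith) hk h0 (by rw [hper, h0]) hm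

lemma monotoneOn_Iio_of_hasDerivAt {φ φ' : ℝ → ℝ} {b : ℝ}
    (h1 : ∀ t < b, HasDerivAt φ (φ' t) t) (h0 : ∀ t < b, 0 ≤ φ' t) : MonotoneOn φ (Iio b) := by
  refine monotoneOn_of_deriv_nonneg (convex_Iio b)
    (fun s hs => (h1 s hs).continuousAt.continuousWithinAt) ?_ ?_ <;>
    rw [interior_Iio]
  · exact fun s hs => (h1 s hs).differentiableAt.differentiableWithinAt
  · intro s hs
    rw [(h1 s hs).deriv]
    exact h0 s hs

/-- If a function with nonnegative second derivative is bounded above near `-∞`, its first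
derivative is nonnegative. -/
lemma deriv_nonneg_of_bddAbove_atBot {φ φ' φ'' : ℝ → ℝ} {b t₀ M : ℝ}
    (h1 : ∀ t < b, HasDerivAt φ (φ' t) t) (h2 : ∀ t < b, HasDerivAt φ' (φ'' t) t)
    (h0 : ∀ t < b, 0 ≤ φ'' t) (hM : ∀ t ≤ t₀, φ t ≤ M) {t : ℝ} (ht : t < b) : 0 ≤ φ' t := by
  have hmono := monotoneOn_Iio_of_hasDerivAt h2 h0
  by_contra! hneg
  set s := min (min t t₀ - 1) (t - (M - φ t + 1) / (-φ' t)) with hs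
  have hst : s < t := by
    have := min_le_left (min t t₀ - 1) (t - (M - φ t + 1) / (-φ' t))
    have := min_le_left t t₀
    linarith
  have hst0 : s ≤ t₀ := by
    have := min_le_left (min t t₀ - 1) (t - (M - φ t + 1) / (-φ' t))
    have := min_le_right t t₀
    linarith
  obtain ⟨c, hc, hc'⟩ := exists_hasDerivAt_eq_slope φ φ' hst
    (fun x hx => (h1 x (hx.2.trans_lt ht)).continuousAt.continuousWithinAt)
    (fun x hx => h1 x (hx.2.trans ht))
  have hle : φ' c ≤ φ' t := hmono (hc.2.trans ht) ht hc.2.le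
  rw [hc', div_le_iff₀ (by linarith)] at hle
  have h3 : s ≤ t - (M - φ t + 1) / (-φ' t) := min_le_right _ _
  have h4 : (M - φ t + 1) / (-φ' t) ≤ t - s := by linarith
  rw [div_le_iff₀ (by linarith)] at h4
  have := hM s hst0
  linarith

/-- A `C²` function `V (t, θ)`, periodic in `θ`, with its derivatives and nonnegative Laplacian
on the half-strip `t < b`. -/
structure IsPeriodicSubharmonic (b : ℝ) (V Vt Vtt Vq Vqq : ℝ → ℝ → ℝ) : Prop where
  hasDerivAt_fst : ∀ t < b, ∀ θ, HasDerivAt (fun s => V s θ) (Vt t θ) t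
  hasDerivAt_fst_fst : ∀ t < b, ∀ θ, HasDerivAt (fun s => Vt s θ) (Vtt t θ) t
  hasDerivAt_snd : ∀ t < b, ∀ θ, HasDerivAt (V t) (Vq t θ) θ
  hasDerivAt_snd_snd : ∀ t < b, ∀ θ, HasDerivAt (Vq t) (Vqq t θ) θ
  periodic : ∀ t, Function.Periodic (V t) (2 * π)
  periodic_snd : ∀ t, Function.Periodic (Vq t) (2 * π)
  cont : ContinuousOn (Function.uncurry V) (Iio b ×ˢ univ)
  cont_fst : ContinuousOn (Function.uncurry Vt) (Iio b ×ˢ univ)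
  cont_fst_fst : ContinuousOn (Function.uncurry Vtt) (Iio b ×ˢ univ)
  cont_snd : ContinuousOn (Function.uncurry Vq) (Iio b ×ˢ univ)
  cont_snd_snd : ContinuousOn (Function.uncurry Vqq) (Iio b ×ˢ univ)
  laplacian_nonneg : ∀ t < b, ∀ θ, 0 ≤ Vtt t θ + Vqq t θ

lemma ContinuousOn.continuous_slice {X : ℝ → ℝ → ℝ} {U : Set ℝ}
    (h : ContinuousOn (Function.uncurry X) (U ×ˢ univ)) {t : ℝ} (ht : t ∈ U) :
    Continuous (X t) := by
  rw [← continuousOn_univ]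
  exact h.comp (f := fun θ => (t, θ)) (by fun_prop) fun θ _ => ⟨ht, mem_univ _⟩

namespace IsPeriodicSubharmonic

variable {b : ℝ} {V Vt Vtt Vq Vqq : ℝ → ℝ → ℝ}

lemma hasDerivAt_integral (h : IsPeriodicSubharmonic b V Vt Vtt Vq Vqq) {t : ℝ} (ht : t < b) :
    HasDerivAt (fun s => ∫ θ in 0..2 * π, V s θ) (∫ θ in 0..2 * π, Vt t θ) t :=
  hasDerivAt_intervalIntegral_of_continuousOn isOpen_Iio h.hasDerivAt_fst
    (fun _ hs => h.cont.continuous_slice hs) h.cont_fst ht _ _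

lemma hasDerivAt_integral_fst (h : IsPeriodicSubharmonic b V Vt Vtt Vq Vqq) {t : ℝ} (ht : t < b) :
    HasDerivAt (fun s => ∫ θ in 0..2 * π, Vt s θ) (∫ θ in 0..2 * π, Vtt t θ) t :=
  hasDerivAt_intervalIntegral_of_continuousOn isOpen_Iio h.hasDerivAt_fst_fst
    (fun _ hs => h.cont_fst.continuous_slice hs) h.cont_fst_fst ht _ _

lemma integral_fst_fst_nonneg (h : IsPeriodicSubharmonic b V Vt Vtt Vq Vqq) {t : ℝ} (ht : t < b) :
    0 ≤ ∫ θ in 0..2 * π, Vtt t θ := by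
  have hq := h.cont_snd_snd.continuous_slice ht
  have htt := h.cont_fst_fst.continuous_slice ht
  have h1 : ∫ θ in 0..2 * π, Vqq t θ = Vq t (2 * π) - Vq t 0 :=
    intervalIntegral.integral_eq_sub_of_hasDerivAt (fun θ _ => h.hasDerivAt_snd_snd t ht θ)
      (hq.intervalIntegrable _ _)
  have h2 : Vq t (2 * π) = Vq t 0 := by simpa using h.periodic_snd t 0
  have h3 : 0 ≤ ∫ θ in 0..2 * π, (Vtt t θ + Vqq t θ) :=
    intervalIntegral.integral_nonneg two_pi_pos.le fun θ _ => h.laplacian_nonneg t ht θ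
  rw [intervalIntegral.integral_add (htt.intervalIntegrable _ _) (hq.intervalIntegrable _ _),
    h1, h2] at h3
  linarith

lemma integral_mono (h : IsPeriodicSubharmonic b V Vt Vtt Vq Vqq) {M t₀ : ℝ}
    (hM : ∀ t ≤ t₀, ∀ θ, V t θ ≤ M) (ht₀ : t₀ < b) :
    MonotoneOn (fun s => ∫ θ in 0..2 * π, V s θ) (Iio b) := by
  refine monotoneOn_Iio_of_hasDerivAt (fun t ht => h.hasDerivAt_integral ht) fun t ht => ?_
  refine deriv_nonneg_of_bddAbove_atBot (t₀ := t₀) (M := 2 * π * M)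
    (fun t ht => h.hasDerivAt_integral ht) (fun t ht => h.hasDerivAt_integral_fst ht)
    (fun t ht => h.integral_fst_fst_nonneg ht) (fun t ht => ?_) ht
  have := intervalIntegral.integral_mono_on (μ := volume) two_pi_pos.le
    ((h.cont.continuous_slice (ht.trans_lt ht₀)).intervalIntegrable _ _)
    (intervalIntegrable_const (c := M)) fun θ _ => hM t ht θ
  simpa using this

/-- Squares of nonnegative periodic subharmonic functions are subharmonic. -/
lemma sq (h : IsPeriodicSubharmonic b V Vt Vtt Vq Vqq) (h0 : ∀ t < b, ∀ θ, 0 ≤ V t θ) :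
    IsPeriodicSubharmonic b (fun t θ => V t θ ^ 2) (fun t θ => 2 * V t θ * Vt t θ)
      (fun t θ => 2 * (Vt t θ ^ 2 + V t θ * Vtt t θ)) (fun t θ => 2 * V t θ * Vq t θ)
      (fun t θ => 2 * (Vq t θ ^ 2 + V t θ * Vqq t θ)) where
  hasDerivAt_fst t ht θ := ((h.hasDerivAt_fst t ht θ).fun_pow 2).congr_deriv (by norm_num)
  hasDerivAt_fst_fst t ht θ := (((h.hasDerivAt_fst t ht θ).const_mul 2).fun_mul
    (h.hasDerivAt_fst_fst t ht θ)).congr_deriv (by ring)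
  hasDerivAt_snd t ht θ := ((h.hasDerivAt_snd t ht θ).fun_pow 2).congr_deriv (by norm_num)
  hasDerivAt_snd_snd t ht θ := (((h.hasDerivAt_snd t ht θ).const_mul 2).fun_mul
    (h.hasDerivAt_snd_snd t ht θ)).congr_deriv (by ring)
  periodic t θ := by simp only [h.periodic t θ]
  periodic_snd t θ := by simp only [h.periodic t θ, h.periodic_snd t θ]
  cont := h.cont.pow 2
  cont_fst := (h.cont.const_mul 2).mul h.cont_fst
  cont_fst_fst := ((h.cont_fst.pow 2).add (h.cont.mul h.cont_fst_fst)).const_mul 2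
  cont_snd := (h.cont.const_mul 2).mul h.cont_snd
  cont_snd_snd := ((h.cont_snd.pow 2).add (h.cont.mul h.cont_snd_snd)).const_mul 2
  laplacian_nonneg t ht θ := by
    nlinarith [mul_nonneg (h0 t ht θ) (h.laplacian_nonneg t ht θ), sq_nonneg (Vt t θ),
      sq_nonneg (Vq t θ)]

/-- Carleman's inequality for the second derivative of the square mean. -/
lemma carleman_second_deriv (h : IsPeriodicSubharmonic b V Vt Vtt Vq Vqq)
    (h0 : ∀ t < b, ∀ θ, 0 ≤ V t θ) {t : ℝ} (ht : t < b) {k : ℝ} (hk : 0 ≤ k)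
    (hW : k = 0 ∨ (∃ θ₀, V t θ₀ = 0) ∧
      k * ∫ θ in 0..2 * π, indicator {θ | V t θ ≠ 0} 1 θ < π)
    (hφ : 0 < ∫ θ in 0..2 * π, V t θ ^ 2) :
    (∫ θ in 0..2 * π, 2 * V t θ * Vt t θ) ^ 2 / (2 * ∫ θ in 0..2 * π, V t θ ^ 2)
      + 2 * k ^ 2 * ∫ θ in 0..2 * π, V t θ ^ 2
      ≤ ∫ θ in 0..2 * π, 2 * (Vt t θ ^ 2 + V t θ * Vtt t θ) := by
  have c0 := h.cont.continuous_slice ht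
  have c1 := h.cont_fst.continuous_slice ht
  have c2 := h.cont_fst_fst.continuous_slice ht
  have c3 := h.cont_snd.continuous_slice ht
  have c4 := h.cont_snd_snd.continuous_slice ht
  have hw : k ^ 2 * ∫ θ in 0..2 * π, V t θ ^ 2 ≤ ∫ θ in 0..2 * π, Vq t θ ^ 2 := by
    rcases hW with rfl | ⟨⟨θ₀, hθ₀⟩, hm⟩
    · simpa using intervalIntegral.integral_nonneg (μ := volume) two_pi_pos.le
        fun θ _ => sq_nonneg (Vq t θ)
    · exact wirtinger_of_periodic (h.hasDerivAt_snd t ht) c3 two_pi_pos.le (h.periodic t) hk hθ₀ hm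
  set A := ∫ θ in 0..2 * π, V t θ ^ 2 with hA
  set B := ∫ θ in 0..2 * π, 2 * V t θ * Vt t θ with hB
  have hparts : ∫ θ in 0..2 * π, 2 * (Vq t θ ^ 2 + V t θ * Vqq t θ) = 0 := by
    rw [intervalIntegral.integral_eq_sub_of_hasDerivAt
      (fun θ _ => (h.sq h0).hasDerivAt_snd_snd t ht θ)
      (Continuous.intervalIntegrable (by fun_prop) _ _)]
    have := (h.sq h0).periodic_snd t 0
    simp only [zero_add] at this
    rw [this, sub_self]
  have hcs : ∀ x : ℝ, 0 ≤ (∫ θ in 0..2 * π, Vt t θ ^ 2) - x * B + x ^ 2 * A := fun x => by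
    have : 0 ≤ ∫ θ in 0..2 * π, (Vt t θ - x * V t θ) ^ 2 :=
      intervalIntegral.integral_nonneg two_pi_pos.le fun θ _ => sq_nonneg _
    refine this.trans_eq ?_
    rw [hA, hB, ← intervalIntegral.integral_const_mul, ← intervalIntegral.integral_const_mul,
      ← intervalIntegral.integral_sub, ← intervalIntegral.integral_add]
    · exact intervalIntegral.integral_congr fun θ _ => by ring
    all_goals exact Continuous.intervalIntegrable (by fun_prop) _ _
  have hmain : 0 ≤ ∫ θ in 0..2 * π, 2 * V t θ * (Vtt t θ + Vqq t θ) :=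
    intervalIntegral.integral_nonneg two_pi_pos.le fun θ _ =>
      mul_nonneg (mul_nonneg zero_le_two (h0 t ht θ)) (h.laplacian_nonneg t ht θ)
  have hmain' : ∫ θ in 0..2 * π, 2 * V t θ * (Vtt t θ + Vqq t θ)
      = (∫ θ in 0..2 * π, 2 * (Vt t θ ^ 2 + V t θ * Vtt t θ))
        + (∫ θ in 0..2 * π, 2 * (Vq t θ ^ 2 + V t θ * Vqq t θ))
        - 2 * (∫ θ in 0..2 * π, Vt t θ ^ 2) - 2 * ∫ θ in 0..2 * π, Vq t θ ^ 2 := by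
    rw [← intervalIntegral.integral_const_mul, ← intervalIntegral.integral_const_mul,
      ← intervalIntegral.integral_add, ← intervalIntegral.integral_sub,
      ← intervalIntegral.integral_sub]
    · exact intervalIntegral.integral_congr fun θ _ => by ring
    all_goals exact Continuous.intervalIntegrable (by fun_prop) _ _
  have hcs := hcs (B / (2 * A))
  have e1 : B / (2 * A) * B - (B / (2 * A)) ^ 2 * A = B ^ 2 / (2 * A) / 2 := by
    field_simp; ring
  rw [hmain', hparts] at hmain
  linarith

end IsPeriodicSubharmonic

namespace IsPeriodicSubharmonic

variable {b : ℝ} {V Vt Vtt Vq Vqq : ℝ → ℝ → ℝ}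

/-- The integrated form of Carleman's inequality: the logarithmic measure of the set of radii
where `V` has small support is controlled by the growth of the square mean. -/
lemma carleman_growth (h : IsPeriodicSubharmonic b V Vt Vtt Vq Vqq)
    (h0 : ∀ t < b, ∀ θ, 0 ≤ V t θ) {M t₀ : ℝ} (hM : ∀ t ≤ t₀, ∀ θ, V t θ ≤ M) (ht₀ : t₀ < b)
    {r₀ r₁ : ℝ} (hr₀ : 0 < r₀) (hr : r₀ ≤ r₁) (hr₁ : Real.log r₁ + 1 < b)
    (hφ : 0 < ∫ θ in 0..2 * π, V (Real.log r₀) θ ^ 2) {k : ℝ} (hk : 0 < k)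
    {S : Set ℝ} (hS : MeasurableSet S)
    (hSV : ∀ r ∈ S, r₀ ≤ r → r ≤ r₁ → (∃ θ₀, V (Real.log r) θ₀ = 0) ∧
      k * ∫ θ in 0..2 * π, indicator {θ | V (Real.log r) θ ≠ 0} 1 θ < π) :
    k * ∫ r in r₀..r₁, indicator S (fun r => 1 / r) r ≤
      Real.log ((1 + k) * √(∫ θ in 0..2 * π, V (Real.log r₁ + 1) θ ^ 2))
        - Real.log (k * √(∫ θ in 0..2 * π, V (Real.log r₀) θ ^ 2)) := by
  set φ : ℝ → ℝ := fun t => ∫ θ in 0..2 * π, V t θ ^ 2 with hφdef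
  set φ' : ℝ → ℝ := fun t => ∫ θ in 0..2 * π, 2 * V t θ * Vt t θ with hφ'def
  set φ'' : ℝ → ℝ := fun t => ∫ θ in 0..2 * π, 2 * (Vt t θ ^ 2 + V t θ * Vtt t θ) with hφ''def
  have hsq := h.sq h0
  have d1 : ∀ t < b, HasDerivAt φ (φ' t) t := fun t ht => hsq.hasDerivAt_integral ht
  have d2 : ∀ t < b, HasDerivAt φ' (φ'' t) t := fun t ht => hsq.hasDerivAt_integral_fst ht
  have hφ'0 : ∀ t < b, 0 ≤ φ' t := fun t ht => by
    refine deriv_nonneg_of_bddAbove_atBot (t₀ := t₀) (M := 2 * π * M ^ 2) d1 d2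
      (fun t ht => hsq.integral_fst_fst_nonneg ht) (fun t ht => ?_) ht
    have := intervalIntegral.integral_mono_on (μ := volume) two_pi_pos.le
      ((hsq.cont.continuous_slice (ht.trans_lt ht₀)).intervalIntegrable _ _)
      (intervalIntegrable_const (c := M ^ 2)) fun θ _ =>
        pow_le_pow_left₀ (h0 t (ht.trans_lt ht₀) θ) (hM t ht θ) 2
    simpa using this
  have hmono := monotoneOn_Iio_of_hasDerivAt d1 hφ'0
  set t₁ := Real.log r₀ with ht₁
  set t₂ := Real.log r₁ with ht₂
  have ht₁₂ : t₁ ≤ t₂ := Real.log_le_log hr₀ hr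
  have hpos : ∀ t, t₁ ≤ t → t < b → 0 < φ t := fun t h1 h2 =>
    lt_of_lt_of_le hφ (hmono (h1.trans_lt h2) h2 h1)
  set g : ℝ → ℝ := fun t => √(φ t) with hg
  set g' : ℝ → ℝ := fun t => φ' t / (2 * g t) with hg'
  set g'' : ℝ → ℝ := fun t => (φ'' t - φ' t ^ 2 / (2 * φ t)) / (2 * g t) with hg''
  have gpos : ∀ t, t₁ ≤ t → t < b → 0 < g t := fun t h1 h2 => Real.sqrt_pos.2 (hpos t h1 h2)
  have gsq : ∀ t, t₁ ≤ t → t < b → g t ^ 2 = φ t := fun t h1 h2 => Real.sq_sqrt (hpos t h1 h2).le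
  have e1 : ∀ t, t₁ ≤ t → t < b → HasDerivAt g (g' t) t := fun t h1 h2 =>
    (d1 t h2).sqrt (hpos t h1 h2).ne'
  have e2 : ∀ t, t₁ ≤ t → t < b → HasDerivAt g' (g'' t) t := fun t h1 h2 => by
    have hg0 := gpos t h1 h2
    refine ((d2 t h2).fun_div ((e1 t h1 h2).const_mul 2) (by positivity)).congr_deriv ?_
    simp only [hg'', hg']
    rw [← gsq t h1 h2]
    field_simp
  have g'0 : ∀ t, t₁ ≤ t → t < b → 0 ≤ g' t := fun t h1 h2 =>
    div_nonneg (hφ'0 t h2) (mul_nonneg zero_le_two (gpos t h1 h2).le)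
  have hkey : ∀ (c : ℝ) t, t₁ ≤ t → t < b → 0 ≤ c → (c = 0 ∨ (∃ θ₀, V t θ₀ = 0) ∧
      c * ∫ θ in 0..2 * π, indicator {θ | V t θ ≠ 0} 1 θ < π) → c ^ 2 * g t ≤ g'' t := by
    intro c t h1 h2 hc hW
    have := h.carleman_second_deriv h0 h2 hc hW (hpos t h1 h2)
    have hg0 := gpos t h1 h2
    simp only [hg'']
    rw [le_div_iff₀ (by positivity)]
    have hh := gsq t h1 h2
    have : φ' t ^ 2 / (2 * φ t) + 2 * c ^ 2 * φ t ≤ φ'' t := this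
    rw [← hh] at this ⊢
    linarith
  have g''0 : ∀ t, t₁ ≤ t → t < b → 0 ≤ g'' t := fun t h1 h2 => by
    simpa using hkey 0 t h1 h2 le_rfl (Or.inl rfl)
  set f : ℝ → ℝ := fun t => g' t + k * g t with hf
  have fpos : ∀ t, t₁ ≤ t → t < b → 0 < f t := fun t h1 h2 =>
    add_pos_of_nonneg_of_pos (g'0 t h1 h2) (mul_pos hk (gpos t h1 h2))
  have hbr : ∀ r ∈ Icc r₀ r₁, 0 < r ∧ t₁ ≤ Real.log r ∧ Real.log r < b := fun r hr' => by
    have h1 : 0 < r := hr₀.trans_le hr'.1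
    refine ⟨h1, Real.log_le_log hr₀ hr'.1, ?_⟩
    have := Real.log_le_log h1 hr'.2
    linarith
  have hd : ∀ r ∈ Icc r₀ r₁, HasDerivAt (fun r => Real.log (f (Real.log r)))
      ((g'' (Real.log r) + k * g' (Real.log r)) * r⁻¹ / f (Real.log r)) r := fun r hr' => by
    obtain ⟨h1, h2, h3⟩ := hbr r hr'
    have hfd : HasDerivAt f (g'' (Real.log r) + k * g' (Real.log r)) (Real.log r) :=
      (e2 _ h2 h3).add ((e1 _ h2 h3).const_mul k)
    exact (hfd.comp r (Real.hasDerivAt_log h1.ne')).log (fpos _ h2 h3).ne'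
  have hint := intervalIntegral.integral_le_sub_of_hasDeriv_right_of_le
    (φ := fun r => k * indicator S (fun r => 1 / r) r) hr
    (fun r hr' => (hd r hr').continuousAt.continuousWithinAt)
    (fun r hr' => (hd r (Ioo_subset_Icc_self hr')).hasDerivWithinAt)
    (((ContinuousOn.integrableOn_Icc (continuousOn_const.div continuousOn_id
      fun r hr' => (hbr r hr').1.ne')).indicator hS).const_mul k)
    (fun r hr' => by
      obtain ⟨h1, h2, h3⟩ := hbr r (Ioo_subset_Icc_self hr')
      have hf0 := fpos _ h2 h3
      have hgn := g'0 _ h2 h3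
      by_cases hrS : r ∈ S
      · rw [indicator_of_mem hrS, le_div_iff₀ hf0, one_div]
        have := hkey k _ h2 h3 hk.le (Or.inr (hSV r hrS hr'.1.le hr'.2.le))
        have hr1 : 0 < r⁻¹ := inv_pos.2 h1
        have : k * f (Real.log r) ≤ g'' (Real.log r) + k * g' (Real.log r) := by
          simp only [hf]; linarith
        calc k * r⁻¹ * f (Real.log r) = (k * f (Real.log r)) * r⁻¹ := by ring
          _ ≤ _ := mul_le_mul_of_nonneg_right this hr1.le
      · rw [indicator_of_notMem hrS, mul_zero]
        have := g''0 _ h2 h3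
        positivity)
  rw [intervalIntegral.integral_const_mul] at hint
  refine hint.trans (sub_le_sub ?_ ?_)
  · have h3 : t₂ < b := by linarith
    refine Real.log_le_log (fpos _ ht₁₂ h3) ?_
    obtain ⟨c, hc, hc'⟩ := exists_hasDerivAt_eq_slope g g' (lt_add_one t₂)
      (fun x hx => (e1 x (ht₁₂.trans hx.1) (hx.2.trans_lt hr₁)).continuousAt.continuousWithinAt)
      (fun x hx => e1 x (ht₁₂.trans hx.1.le) (hx.2.trans hr₁))
    have hg'mono : g' t₂ ≤ g' c := by
      obtain ⟨d, hd1, hd2⟩ := exists_hasDerivAt_eq_slope g' g'' hc.1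
        (fun x hx => (e2 x (ht₁₂.trans hx.1)
          (hx.2.trans_lt (hc.2.trans hr₁))).continuousAt.continuousWithinAt)
        (fun x hx => e2 x (ht₁₂.trans hx.1.le) (hx.2.trans (hc.2.trans hr₁)))
      have h5 := g''0 d (ht₁₂.trans hd1.1.le) (hd1.2.trans (hc.2.trans hr₁))
      rw [hd2, le_div_iff₀ (by linarith [hc.1])] at h5
      linarith
    have hgmono : g t₂ ≤ g (t₂ + 1) := Real.sqrt_le_sqrt (hmono h3 hr₁ (lt_add_one t₂).le)
    have h6 := gpos t₂ ht₁₂ h3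
    have h7 : g' c = g (t₂ + 1) - g t₂ := by rw [hc']; simp
    change g' t₂ + k * g t₂ ≤ (1 + k) * g (t₂ + 1)
    nlinarith
  · have h3 : t₁ < b := by linarith
    have h6 := gpos t₁ le_rfl h3
    refine Real.log_le_log (mul_pos hk h6) ?_
    change k * g t₁ ≤ g' t₁ + k * g t₁
    linarith [g'0 t₁ le_rfl h3]

end IsPeriodicSubharmonic

/-- `W` is `C²` on `B` with gradient `G` and Hessian `H`, and has nonnegative Laplacian. -/
structure IsSmoothSubharmonicOn (B : Set ℂ) (W : ℂ → ℝ) (G : ℂ → ℂ →L[ℝ] ℝ)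
    (H : ℂ → ℂ →L[ℝ] ℂ →L[ℝ] ℝ) : Prop where
  hasFDerivAt : ∀ z ∈ B, HasFDerivAt W (G z) z
  hasFDerivAt_grad : ∀ z ∈ B, HasFDerivAt G (H z) z
  continuousOn_hessian : ContinuousOn H B
  laplacian_nonneg : ∀ z ∈ B, ∀ w, 0 ≤ H z w w + H z (Complex.I * w) (Complex.I * w)

/-- The exponential map in polar coordinates. -/
noncomputable def polarExp (t θ : ℝ) : ℂ := Complex.exp (t + θ * Complex.I)

lemma norm_polarExp (t θ : ℝ) : ‖polarExp t θ‖ = Real.exp t := by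
  simp [polarExp, Complex.norm_exp]

lemma polarExp_log {r : ℝ} (hr : 0 < r) (θ : ℝ) :
    polarExp (Real.log r) θ = r * Complex.exp (θ * Complex.I) := by
  rw [polarExp, Complex.exp_add, ← Complex.ofReal_exp, Real.exp_log hr]

lemma hasDerivAt_polarExp_fst (t θ : ℝ) :
    HasDerivAt (fun s => polarExp s θ) (polarExp t θ) t :=
  (((Complex.ofRealCLM.hasDerivAt (x := t)).add_const _).cexp).congr_deriv (by simp [polarExp])

lemma hasDerivAt_polarExp_snd (t θ : ℝ) :
    HasDerivAt (polarExp t) (Complex.I * polarExp t θ) θ :=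
  ((((Complex.ofRealCLM.hasDerivAt (x := θ)).mul_const Complex.I).const_add
    (t : ℂ)).cexp).congr_deriv
    (by simp [polarExp, mul_comm])

lemma continuous_polarExp : Continuous (Function.uncurry polarExp) := by
  unfold polarExp Function.uncurry
  fun_prop

lemma periodic_polarExp (t : ℝ) : Function.Periodic (polarExp t) (2 * π) := fun θ => by
  simp only [polarExp]
  push_cast
  rw [add_mul, ← add_assoc, Complex.exp_add, Complex.exp_two_pi_mul_I, mul_one]

namespace IsSmoothSubharmonicOn

variable {B : Set ℂ} {W : ℂ → ℝ} {G : ℂ → ℂ →L[ℝ] ℝ} {H : ℂ → ℂ →L[ℝ] ℂ →L[ℝ] ℝ}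

lemma continuousOn (h : IsSmoothSubharmonicOn B W G H) : ContinuousOn W B :=
  fun z hz => (h.hasFDerivAt z hz).continuousAt.continuousWithinAt

lemma continuousOn_grad (h : IsSmoothSubharmonicOn B W G H) : ContinuousOn G B :=
  fun z hz => (h.hasFDerivAt_grad z hz).continuousAt.continuousWithinAt

lemma mono (h : IsSmoothSubharmonicOn B W G H) {B' : Set ℂ} (hB : B' ⊆ B) :
    IsSmoothSubharmonicOn B' W G H :=
  ⟨fun z hz => h.hasFDerivAt z (hB hz), fun z hz => h.hasFDerivAt_grad z (hB hz),
    h.continuousOn_hessian.mono hB, fun z hz => h.laplacian_nonneg z (hB hz)⟩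

lemma comp_convex (h : IsSmoothSubharmonicOn B W G H) {Ψ Ψ' Ψ'' : ℝ → ℝ}
    (h1 : ∀ x, HasDerivAt Ψ (Ψ' x) x) (h2 : ∀ x, HasDerivAt Ψ' (Ψ'' x) x)
    (hc : Continuous Ψ'') (hn : ∀ x, 0 ≤ Ψ'' x) (hm : ∀ z ∈ B, 0 ≤ Ψ' (W z)) :
    IsSmoothSubharmonicOn B (fun z => Ψ (W z)) (fun z => Ψ' (W z) • G z)
      (fun z => Ψ' (W z) • H z + (Ψ'' (W z) • G z).smulRight (G z)) where
  hasFDerivAt z hz := (h1 (W z)).comp_hasFDerivAt z (h.hasFDerivAt z hz)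
  hasFDerivAt_grad z hz :=
    ((h2 (W z)).comp_hasFDerivAt z (h.hasFDerivAt z hz)).smul (h.hasFDerivAt_grad z hz)
  continuousOn_hessian := by
    have hW := h.continuousOn
    have hG := h.continuousOn_grad
    have hΨ' : Continuous Ψ' := continuous_iff_continuousAt.2 fun x => (h2 x).continuousAt
    have h3 : ContinuousOn (fun z => Ψ' (W z) • H z) B :=
      (hΨ'.comp_continuousOn hW).smul h.continuousOn_hessian
    have h4 : ContinuousOn (fun z => (Ψ'' (W z) • G z).smulRight (G z)) B :=
      ((ContinuousLinearMap.smulRightL ℝ ℂ (ℂ →L[ℝ] ℝ)).continuous.comp_continuousOn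
        ((hc.comp_continuousOn hW).smul hG)).clm_apply hG
    have h5 : IsTopologicalAddGroup (ℂ →L[ℝ] ℂ →L[ℝ] ℝ) := inferInstance
    exact @ContinuousOn.add _ _ _ h5.toContinuousAdd _ _ _ _ _ h3 h4
  laplacian_nonneg z hz w := by
    have := mul_nonneg (hm z hz) (h.laplacian_nonneg z hz w)
    have h3 := mul_nonneg (hn (W z)) (add_nonneg (sq_nonneg (G z w))
      (sq_nonneg (G z (Complex.I * w))))
    simp only [add_apply, smul_apply,
      ContinuousLinearMap.smulRight_apply, smul_eq_mul]
    linarith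

end IsSmoothSubharmonicOn

lemma hasFDerivAt_indicator_of_frontier {E F : Type*} [NormedAddCommGroup E] [NormedSpace ℝ E]
    [NormedAddCommGroup F] [NormedSpace ℝ F] {f : E → F} {f' : E →L[ℝ] F} {P : Set E} {x : E}
    (hf : HasFDerivAt f f' x) (hx : x ∈ frontier P → f x = 0 ∧ f' = 0) :
    HasFDerivAt (P.indicator f) (if x ∈ P then f' else 0) x := by
  by_cases hfr : x ∈ frontier P
  · obtain ⟨h0, h1⟩ := hx hfr
    have h2 : (if x ∈ P then f' else 0) = 0 := by simp [h1]
    have h3 : P.indicator f x = 0 := by simp [indicator, h0]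
    rw [h2, hasFDerivAt_iff_isLittleO]
    rw [hasFDerivAt_iff_isLittleO] at hf
    simp only [h0, h1, h3, sub_zero, zero_apply] at hf ⊢
    exact (Asymptotics.isBigO_of_le _ fun y => norm_indicator_le_norm_self f y).trans_isLittleO hf
  · by_cases hxP : x ∈ P
    · have hint : x ∈ interior P := by
        by_contra h
        exact hfr ⟨subset_closure hxP, h⟩
      rw [if_pos hxP]
      refine hf.congr_of_eventuallyEq ?_
      filter_upwards [mem_interior_iff_mem_nhds.1 hint] with y hy using indicator_of_mem hy f
    · have hcl : x ∉ closure P := fun h => hfr ⟨h, fun h' => hxP (interior_subset h')⟩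
      rw [if_neg hxP]
      refine (hasFDerivAt_const (0 : F) x).congr_of_eventuallyEq ?_
      filter_upwards [isClosed_closure.isOpen_compl.mem_nhds hcl] with y hy using
        indicator_of_notMem (fun h => hy (subset_closure h)) f

namespace IsSmoothSubharmonicOn

variable {B : Set ℂ} {W : ℂ → ℝ} {G : ℂ → ℂ →L[ℝ] ℝ} {H : ℂ → ℂ →L[ℝ] ℂ →L[ℝ] ℝ}

lemma indicator (h : IsSmoothSubharmonicOn B W G H) {P : Set ℂ}
    (hP : ∀ z ∈ B, z ∈ frontier P → W z = 0 ∧ G z = 0 ∧ H z = 0) :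
    IsSmoothSubharmonicOn B (P.indicator W) (P.indicator G) (P.indicator H) where
  hasFDerivAt z hz := by
    have := hasFDerivAt_indicator_of_frontier (P := P) (h.hasFDerivAt z hz)
      fun hf => ⟨(hP z hz hf).1, (hP z hz hf).2.1⟩
    simpa only [Set.indicator] using this
  hasFDerivAt_grad z hz := by
    have := hasFDerivAt_indicator_of_frontier (P := P) (h.hasFDerivAt_grad z hz)
      fun hf => (hP z hz hf).2
    simpa only [Set.indicator] using this
  continuousOn_hessian := by
    refine ContinuousOn.piecewise (f := H) (g := 0) (fun z hz => ?_)
      (h.continuousOn_hessian.mono inter_subset_left) continuousOn_const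
    exact (hP z hz.1 hz.2).2.2
  laplacian_nonneg z hz w := by
    by_cases hzP : z ∈ P
    · simpa [indicator_of_mem hzP] using h.laplacian_nonneg z hz w
    · simp [indicator_of_notMem hzP]

lemma isPeriodicSubharmonic (h : IsSmoothSubharmonicOn B W G H) (c : ℂ) {b : ℝ}
    (hb : ∀ t < b, ∀ θ, c + polarExp t θ ∈ B) :
    IsPeriodicSubharmonic b (fun t θ => W (c + polarExp t θ))
      (fun t θ => G (c + polarExp t θ) (polarExp t θ))
      (fun t θ => H (c + polarExp t θ) (polarExp t θ) (polarExp t θ)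
        + G (c + polarExp t θ) (polarExp t θ))
      (fun t θ => G (c + polarExp t θ) (Complex.I * polarExp t θ))
      (fun t θ => H (c + polarExp t θ) (Complex.I * polarExp t θ) (Complex.I * polarExp t θ)
        + G (c + polarExp t θ) (Complex.I * (Complex.I * polarExp t θ))) := by
  have hmaps : MapsTo (fun p : ℝ × ℝ => c + polarExp p.1 p.2) (Iio b ×ˢ univ) B :=
    fun p hp => hb p.1 hp.1 p.2
  have hE : Continuous fun p : ℝ × ℝ => polarExp p.1 p.2 := continuous_polarExp
  have hE' : ContinuousOn (fun p : ℝ × ℝ => c + polarExp p.1 p.2) (Iio b ×ˢ univ) :=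
    (continuous_const.add hE).continuousOn
  have hI : Continuous fun p : ℝ × ℝ => Complex.I * polarExp p.1 p.2 := continuous_const.mul hE
  have hII : Continuous fun p : ℝ × ℝ => Complex.I * (Complex.I * polarExp p.1 p.2) :=
    continuous_const.mul hI
  have hG := h.continuousOn_grad.comp hE' hmaps
  have hH := h.continuousOn_hessian.comp hE' hmaps
  have hW1 (t : ℝ) (ht : t < b) (θ : ℝ) : HasDerivAt (fun s => W (c + polarExp s θ))
      (G (c + polarExp t θ) (polarExp t θ)) t :=
    (h.hasFDerivAt _ (hb t ht θ)).comp_hasDerivAt t ((hasDerivAt_polarExp_fst t θ).const_add c)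
  have hW2 (t : ℝ) (ht : t < b) (θ : ℝ) : HasDerivAt (fun θ => W (c + polarExp t θ))
      (G (c + polarExp t θ) (Complex.I * polarExp t θ)) θ :=
    (h.hasFDerivAt _ (hb t ht θ)).comp_hasDerivAt θ ((hasDerivAt_polarExp_snd t θ).const_add c)
  have hG1 (t : ℝ) (ht : t < b) (θ : ℝ) : HasDerivAt (fun s => G (c + polarExp s θ))
      (H (c + polarExp t θ) (polarExp t θ)) t :=
    (h.hasFDerivAt_grad _ (hb t ht θ)).comp_hasDerivAt t
      ((hasDerivAt_polarExp_fst t θ).const_add c)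
  have hG2 (t : ℝ) (ht : t < b) (θ : ℝ) : HasDerivAt (fun θ => G (c + polarExp t θ))
      (H (c + polarExp t θ) (Complex.I * polarExp t θ)) θ :=
    (h.hasFDerivAt_grad _ (hb t ht θ)).comp_hasDerivAt θ
      ((hasDerivAt_polarExp_snd t θ).const_add c)
  refine ⟨hW1, fun t ht θ => (hG1 t ht θ).clm_apply (hasDerivAt_polarExp_fst t θ), hW2,
    fun t ht θ => (hG2 t ht θ).clm_apply ((hasDerivAt_polarExp_snd t θ).const_mul Complex.I),
    fun t θ => by simp only [periodic_polarExp t θ],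
    fun t θ => by simp only [periodic_polarExp t θ],
    h.continuousOn.comp hE' hmaps, hG.clm_apply hE.continuousOn,
    ((hH.clm_apply hE.continuousOn).clm_apply hE.continuousOn).add (hG.clm_apply hE.continuousOn),
    hG.clm_apply hI.continuousOn,
    ((hH.clm_apply hI.continuousOn).clm_apply hI.continuousOn).add
      (hG.clm_apply hII.continuousOn), fun t ht θ => ?_⟩
  have h1 := h.laplacian_nonneg _ (hb t ht θ) (polarExp t θ)
  have h2 : Complex.I * (Complex.I * polarExp t θ) = -polarExp t θ := by
    rw [← mul_assoc, Complex.I_mul_I, neg_one_mul]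
  rw [h2, map_neg]
  linarith

lemma exists_near (h : IsSmoothSubharmonicOn B W G H) {c : ℂ} (hc : c ∈ B) (b : ℝ) {ε : ℝ}
    (hε : 0 < ε) : ∃ t₀ < b, ∀ t ≤ t₀, ∀ θ, |W (c + polarExp t θ) - W c| < ε := by
  obtain ⟨δ, hδ, hδW⟩ := Metric.continuousAt_iff.1 (h.hasFDerivAt c hc).continuousAt ε hε
  refine ⟨min (Real.log δ) b - 1, by linarith [min_le_right (Real.log δ) b], fun t ht θ => ?_⟩
  refine hδW ?_
  rw [dist_eq_norm, add_sub_cancel_left, norm_polarExp, ← Real.lt_log_iff_exp_lt hδ]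
  linarith [min_le_left (Real.log δ) b]

/-- Circle means of a smooth subharmonic function are monotone in the radius. -/
lemma mean_mono (h : IsSmoothSubharmonicOn B W G H) {c : ℂ} (hc : c ∈ B) {b : ℝ}
    (hb : ∀ t < b, ∀ θ, c + polarExp t θ ∈ B) :
    MonotoneOn (fun t => ∫ θ in 0..2 * π, W (c + polarExp t θ)) (Iio b) := by
  obtain ⟨t₀, ht₀, hM⟩ := h.exists_near hc b one_pos
  exact (h.isPeriodicSubharmonic c hb).integral_mono (M := W c + 1)
    (fun t ht θ => by have := (abs_lt.1 (hM t ht θ)).2; linarith) ht₀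

lemma le_mean (h : IsSmoothSubharmonicOn B W G H) {c : ℂ} (hc : c ∈ B) {b : ℝ}
    (hb : ∀ t < b, ∀ θ, c + polarExp t θ ∈ B) {t : ℝ} (ht : t < b) :
    2 * π * W c ≤ ∫ θ in 0..2 * π, W (c + polarExp t θ) := by
  have hp := h.isPeriodicSubharmonic c hb
  refine le_of_forall_pos_le_add fun ε hε => ?_
  obtain ⟨t₀, ht₀, hM⟩ := h.exists_near hc t (ε := ε / (2 * π)) (by positivity)
  have h1 := h.mean_mono hc hb (ht₀.trans ht) ht ht₀.le
  have h2 := intervalIntegral.integral_mono_on (μ := volume) two_pi_pos.le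
    (intervalIntegrable_const (c := W c - ε / (2 * π)))
    ((hp.cont.continuous_slice (ht₀.trans ht)).intervalIntegrable _ _)
    (fun θ _ => by have := (abs_lt.1 (hM t₀ le_rfl θ)).1; linarith)
  have h3 : 2 * π * (ε / (2 * π)) = ε := by field_simp
  simp only [intervalIntegral.integral_const, smul_eq_mul, sub_zero] at h1 h2
  linarith

end IsSmoothSubharmonicOn

/-- The sub-mean value inequality on all circles. -/
def HasSubMean (f : ℂ → ℝ) : Prop :=
  ∀ z w : ℂ, 2 * π * f z ≤ ∫ θ in 0..2 * π, f (z + w * Complex.exp (θ * Complex.I))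

/-- A `C²` function with the sub-mean value property has nonnegative Laplacian. -/
lemma HasSubMean.isSmoothSubharmonicOn {f : ℂ → ℝ} (hf : HasSubMean f) (h2 : ContDiff ℝ 2 f) :
    IsSmoothSubharmonicOn univ f (fderiv ℝ f) (fderiv ℝ (fderiv ℝ f)) := by
  have h1 : ContDiff ℝ 1 (fderiv ℝ f) := h2.fderiv_right (by norm_num)
  have hG : ∀ z, HasFDerivAt f (fderiv ℝ f z) z := fun z =>
    (h2.differentiable (by norm_num) z).hasFDerivAt
  have hH : ∀ z, HasFDerivAt (fderiv ℝ f) (fderiv ℝ (fderiv ℝ f) z) z := fun z =>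
    (h1.differentiable (by norm_num) z).hasFDerivAt
  have hHc : Continuous (fderiv ℝ (fderiv ℝ f)) := h1.continuous_fderiv (by norm_num)
  have hGc := h1.continuous
  refine ⟨fun z _ => hG z, fun z _ => hH z, hHc.continuousOn, fun z _ w => ?_⟩
  set G := fderiv ℝ f
  set H := fderiv ℝ G
  set e : ℝ → ℂ := fun θ => w * Complex.exp (θ * Complex.I) with he
  have hec : Continuous e := by fun_prop
  have hline : ∀ s θ : ℝ, HasDerivAt (fun s : ℝ => z + s • e θ) (e θ) s := fun s θ => by
    simpa using ((hasDerivAt_id s).smul_const (e θ)).const_add z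
  set m : ℝ → ℝ := fun s => ∫ θ in 0..2 * π, f (z + s • e θ) with hm
  have hm1 : ∀ s, HasDerivAt m (∫ θ in 0..2 * π, G (z + s • e θ) (e θ)) s := fun s =>
    hasDerivAt_intervalIntegral_of_continuousOn isOpen_univ
      (fun s _ θ => (hG _).comp_hasDerivAt s (hline s θ))
      (fun s _ => h2.continuous.comp (by fun_prop))
      (Continuous.continuousOn (by unfold Function.uncurry; fun_prop)) (mem_univ s) _ _
  have hm2 : ∀ s, HasDerivAt (fun s => ∫ θ in 0..2 * π, G (z + s • e θ) (e θ))
      (∫ θ in 0..2 * π, H (z + s • e θ) (e θ) (e θ)) s := fun s =>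
    hasDerivAt_intervalIntegral_of_continuousOn (f' := fun s θ => H (z + s • e θ) (e θ) (e θ))
      isOpen_univ
      (fun s _ θ => (((hH _).comp_hasDerivAt s (hline s θ)).clm_apply
        (hasDerivAt_const s (e θ))).congr_deriv (by simp))
      (fun s _ => by fun_prop)
      (Continuous.continuousOn (by unfold Function.uncurry; fun_prop)) (mem_univ s) _ _
  have hexp : ∀ θ : ℝ, e θ = Real.cos θ • w + Real.sin θ • (Complex.I * w) := fun θ => by
    simp only [he, Complex.exp_mul_I, Complex.real_smul, Complex.ofReal_cos, Complex.ofReal_sin]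
    ring
  have hd0 : ∫ θ in 0..2 * π, G (z + (0 : ℝ) • e θ) (e θ) = 0 := by
    simp only [zero_smul, add_zero, hexp, map_add, map_smul, smul_eq_mul]
    rw [intervalIntegral.integral_add (Continuous.intervalIntegrable (by fun_prop) _ _)
      (Continuous.intervalIntegrable (by fun_prop) _ _), intervalIntegral.integral_mul_const,
      intervalIntegral.integral_mul_const, integral_cos, integral_sin]
    simp
  have hdd0 : ∫ θ in 0..2 * π, H (z + (0 : ℝ) • e θ) (e θ) (e θ)
      = π * (H z w w + H z (Complex.I * w) (Complex.I * w)) := by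
    simp only [zero_smul, add_zero, hexp, map_add, map_smul, smul_eq_mul,
      add_apply, smul_apply]
    rw [intervalIntegral.integral_congr (g := fun θ : ℝ =>
      Real.cos θ ^ 2 * H z w w + Real.sin θ ^ 2 * H z (Complex.I * w) (Complex.I * w)
          + Real.sin θ * Real.cos θ * (H z (Complex.I * w) w + H z w (Complex.I * w)))
        fun θ _ => by beta_reduce; ring]
    rw [intervalIntegral.integral_add (Continuous.intervalIntegrable (by fun_prop) _ _)
      (Continuous.intervalIntegrable (by fun_prop) _ _),
      intervalIntegral.integral_add (Continuous.intervalIntegrable (by fun_prop) _ _)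
      (Continuous.intervalIntegrable (by fun_prop) _ _), intervalIntegral.integral_mul_const,
      intervalIntegral.integral_mul_const, intervalIntegral.integral_mul_const,
      integral_cos_sq, integral_sin_sq, integral_sin_mul_cos₁]
    simp
    ring
  by_contra! hneg
  have hmin : ∀ s, m 0 ≤ m s := fun s => by
    have h0 : m 0 = 2 * π * f z := by simp [hm]
    have h3 := hf z (s * w)
    rw [h0]
    refine h3.trans_eq (intervalIntegral.integral_congr fun θ _ => ?_)
    simp [he, mul_assoc]
  have hderiv : deriv m = fun s => ∫ θ in 0..2 * π, G (z + s • e θ) (e θ) :=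
    funext fun s => (hm1 s).deriv
  have hdd : deriv (deriv m) 0 < 0 := by
    rw [hderiv, (hm2 0).deriv, hdd0]
    exact mul_neg_of_pos_of_neg Real.pi_pos hneg
  have hmax := isLocalMax_of_deriv_deriv_neg hdd (by rw [hderiv]; exact hd0) (hm1 0).continuousAt
  have hconst : m =ᶠ[𝓝 0] fun _ => m 0 := by
    filter_upwards [hmax] with s hs using le_antisymm hs (hmin s)
  have h3 : deriv m =ᶠ[𝓝 0] fun _ => 0 := by simpa using hconst.deriv
  have h4 := h3.deriv_eq
  simp only [deriv_const] at h4
  linarith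

/-- A measurable, nonnegative, locally bounded function with the sub-mean value property. -/
structure IsNonnegSubMean (v : ℂ → ℝ) : Prop where
  measurable : Measurable v
  nonneg : ∀ z, 0 ≤ v z
  bounded : ∀ R, ∃ C, ∀ z, ‖z‖ ≤ R → v z ≤ C
  hasSubMean : HasSubMean v

/-- A radial bump function with integral one, supported in the ball of radius `δ`. -/
structure IsRadialBump (δ : ℝ) (χ : ℂ → ℝ) : Prop where
  contDiff : ContDiff ℝ 2 χ
  nonneg : ∀ y, 0 ≤ χ y
  eq_zero : ∀ y, δ ≤ ‖y‖ → χ y = 0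
  radial : ∀ y y', ‖y‖ = ‖y'‖ → χ y = χ y'
  integral_eq_one : ∫ y, χ y = 1

lemma hasCompactSupport_of_eq_zero {χ : ℂ → ℝ} {δ : ℝ} (h : ∀ y, δ ≤ ‖y‖ → χ y = 0) :
    HasCompactSupport χ :=
  HasCompactSupport.intro (isCompact_closedBall 0 δ) fun y hy => h y (by
    simpa using (not_le.1 (fun h' => hy (by simpa using h'))).le)

lemma exists_isRadialBump {δ : ℝ} (hδ : 0 < δ) : ∃ χ, IsRadialBump δ χ := by
  set g : ℂ → ℝ := fun y => Real.smoothTransition (1 - ‖y‖ ^ 2 / δ ^ 2) with hg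
  have hgc : ContDiff ℝ 2 g := Real.smoothTransition.contDiff.comp
    (contDiff_const.sub ((contDiff_norm_sq ℝ).div_const _))
  have hg0 : ∀ y, 0 ≤ g y := fun y => Real.smoothTransition.nonneg _
  have hgs : ∀ y, δ ≤ ‖y‖ → g y = 0 := fun y hy => by
    refine Real.smoothTransition.zero_of_nonpos ?_
    rw [sub_nonpos, one_le_div (by positivity)]
    gcongr
  have hpos : 0 < ∫ y, g y :=
    hgc.continuous.integral_pos_of_hasCompactSupport_nonneg_nonzero
      (hasCompactSupport_of_eq_zero hgs) hg0 (x := 0) (by simp [hg])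
  refine ⟨fun y => (∫ y, g y)⁻¹ * g y, contDiff_const.mul hgc,
    fun y => mul_nonneg (inv_nonneg.2 hpos.le) (hg0 y), fun y hy => by simp [hgs y hy],
    fun y y' h => by simp [hg, h], ?_⟩
  rw [integral_const_mul, inv_mul_cancel₀ hpos.ne']

namespace IsRadialBump

variable {δ : ℝ} {χ v : ℂ → ℝ}

lemma integrable (h : IsRadialBump δ χ) : Integrable χ :=
  h.contDiff.continuous.integrable_of_hasCompactSupport (hasCompactSupport_of_eq_zero h.eq_zero)

lemma norm_mul_le (h : IsRadialBump δ χ) {y : ℂ} {x C : ℝ} (hx : 0 ≤ x)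
    (hC : ‖y‖ ≤ δ → x ≤ C) : ‖χ y * x‖ ≤ C * χ y := by
  rw [Real.norm_of_nonneg (mul_nonneg (h.nonneg y) hx), mul_comm]
  rcases le_total ‖y‖ δ with hy | hy
  · exact mul_le_mul_of_nonneg_right (hC hy) (h.nonneg y)
  · simp [h.eq_zero y hy]

lemma integrable_mul (h : IsRadialBump δ χ) (hv : IsNonnegSubMean v) {A : ℂ → ℂ}
    (hA : Continuous A) : Integrable fun y => χ y * v (A y) := by
  obtain ⟨R, hR⟩ := ((isCompact_closedBall (0 : ℂ) δ).image hA).isBounded.exists_norm_le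
  obtain ⟨C, hC⟩ := hv.bounded R
  refine (h.integrable.const_mul C).mono'
    (h.contDiff.continuous.measurable.mul (hv.measurable.comp hA.measurable)).aestronglyMeasurable
    (Eventually.of_forall fun y => h.norm_mul_le (hv.nonneg _) fun hy => hC _ (hR _ ?_))
  exact mem_image_of_mem A (by simpa using hy)

/-- Lower bound for averages over `θ` of smoothings, by Fubini. -/
lemma integral_le_integral_integral (h : IsRadialBump δ χ) (hv : IsNonnegSubMean v)
    {A : ℝ → ℂ → ℂ} (hA : Continuous (Function.uncurry A)) {m : ℂ → ℝ}
    (hm : ∀ y, m y ≤ ∫ θ in 0..2 * π, v (A θ y)) (hmi : Integrable fun y => χ y * m y) :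
    ∫ y, χ y * m y ≤ ∫ θ in 0..2 * π, ∫ y, χ y * v (A θ y) := by
  obtain ⟨R, hR⟩ := ((isCompact_Icc.prod (isCompact_closedBall (0 : ℂ) δ)).image
    hA).isBounded.exists_norm_le (s := Function.uncurry A '' (Icc 0 (2 * π) ×ˢ _))
  obtain ⟨C, hC⟩ := hv.bounded R
  have hint : Integrable (fun p : ℝ × ℂ => χ p.2 * v (A p.1 p.2))
      ((volume.restrict (Ioc 0 (2 * π))).prod volume) := by
    refine ((h.integrable.const_mul C).comp_snd _).mono'
      ((h.contDiff.continuous.measurable.comp measurable_snd).mul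
        (hv.measurable.comp hA.measurable)).aestronglyMeasurable ?_
    have : ∀ᵐ p : ℝ × ℂ ∂((volume.restrict (Ioc 0 (2 * π))).prod volume),
        p.1 ∈ Ioc 0 (2 * π) :=
      Measure.quasiMeasurePreserving_fst.ae (ae_restrict_mem measurableSet_Ioc)
    filter_upwards [this] with p hp
    refine h.norm_mul_le (hv.nonneg _) fun hy => hC _ (hR _ ?_)
    exact ⟨p, ⟨Ioc_subset_Icc_self hp, by simpa using hy⟩, rfl⟩
  rw [intervalIntegral.integral_of_le two_pi_pos.le, integral_integral_swap hint]
  refine integral_mono hmi hint.integral_prod_right fun y => ?_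
  simp only
  rw [integral_const_mul, ← intervalIntegral.integral_of_le two_pi_pos.le]
  exact mul_le_mul_of_nonneg_left (hm y) (h.nonneg y)

lemma exists_smooth_approx (h : IsRadialBump δ χ) (hv : IsNonnegSubMean v) :
    ContDiff ℝ 2 (fun z => ∫ y, χ y * v (z - y)) ∧
    HasSubMean (fun z => ∫ y, χ y * v (z - y)) ∧
    (∀ z, v z ≤ ∫ y, χ y * v (z - y)) ∧
    ∀ z C, (∀ y, ‖y - z‖ ≤ δ → v y ≤ C) → ∫ y, χ y * v (z - y) ≤ C := by
  refine ⟨?_, fun z w => ?_, fun z => ?_, fun z C hC => ?_⟩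
  · refine HasCompactSupport.contDiff_convolution_left (ContinuousLinearMap.lsmul ℝ ℝ)
      (hasCompactSupport_of_eq_zero h.eq_zero) h.contDiff ?_
    rw [locallyIntegrable_iff]
    intro K hK
    obtain ⟨R, hR⟩ := hK.isBounded.exists_norm_le
    obtain ⟨C, hC⟩ := hv.bounded R
    refine Measure.integrableOn_of_bounded (M := C) hK.measure_lt_top.ne
      hv.measurable.aestronglyMeasurable ?_
    filter_upwards [ae_restrict_mem hK.measurableSet] with y hy
    rw [Real.norm_of_nonneg (hv.nonneg y)]
    exact hC y (hR y hy)
  · have := h.integral_le_integral_integral hv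
      (A := fun θ y => z + w * Complex.exp (θ * Complex.I) - y)
      (by unfold Function.uncurry; fun_prop) (m := fun y => 2 * π * v (z - y))
      (fun y => (hv.hasSubMean (z - y) w).trans_eq (by simp only [sub_add_eq_add_sub]))
      (((h.integrable_mul hv (by fun_prop : Continuous fun y => z - y)).const_mul
        (2 * π)).congr (Eventually.of_forall fun y => by ring))
    refine le_trans (le_of_eq ?_) this
    rw [← integral_const_mul]
    exact integral_congr_ae (Eventually.of_forall fun y => by ring)
  · have h1 := h.integral_le_integral_integral hv
      (A := fun θ y => z + -y * Complex.exp (θ * Complex.I))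
      (by unfold Function.uncurry; fun_prop) (m := fun y => 2 * π * v z)
      (fun y => hv.hasSubMean z (-y)) (h.integrable.mul_const _)
    have h2 : ∀ θ : ℝ, ∫ y, χ y * v (z + -y * Complex.exp (θ * Complex.I))
        = ∫ y, χ y * v (z - y) := fun θ => by
      have h3 := (rotation (Circle.exp θ)).measurePreserving.integral_comp
        (rotation (Circle.exp θ)).toHomeomorph.measurableEmbedding (fun y => χ y * v (z - y))
      rw [← h3]
      refine integral_congr_ae (Eventually.of_forall fun y => ?_)
      simp only
      rw [h.radial (rotation (Circle.exp θ) y) y (LinearIsometryEquiv.norm_map _ y),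
        rotation_apply, Circle.coe_exp]
      ring_nf
    simp only [h2, integral_mul_const, h.integral_eq_one, intervalIntegral.integral_const,
      smul_eq_mul, sub_zero, one_mul] at h1
    exact le_of_mul_le_mul_left h1 two_pi_pos
  · calc ∫ y, χ y * v (z - y) ≤ ∫ y, χ y * C := by
          refine integral_mono (h.integrable_mul hv (by fun_prop)) (h.integrable.mul_const C)
            fun y => ?_
          rcases le_total ‖y‖ δ with hy | hy
          · exact mul_le_mul_of_nonneg_left (hC _ (by simpa using hy)) (h.nonneg y)
          · simp [h.eq_zero y hy]
      _ = C := by rw [integral_mul_const, h.integral_eq_one, one_mul]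

end IsRadialBump

/-- Smoothing of a nonnegative function with the sub-mean value property. -/
lemma IsNonnegSubMean.exists_smooth_approx {v : ℂ → ℝ} (hv : IsNonnegSubMean v) {δ : ℝ}
    (hδ : 0 < δ) : ∃ (f : ℂ → ℝ) (G : ℂ → ℂ →L[ℝ] ℝ) (H : ℂ → ℂ →L[ℝ] ℂ →L[ℝ] ℝ),
      IsSmoothSubharmonicOn univ f G H ∧ (∀ z, v z ≤ f z) ∧
      ∀ z C, (∀ y, ‖y - z‖ ≤ δ → v y ≤ C) → f z ≤ C := by
  obtain ⟨χ, hχ⟩ := exists_isRadialBump hδ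
  obtain ⟨h1, h2, h3, h4⟩ := hχ.exists_smooth_approx hv
  exact ⟨_, _, _, h2.isSmoothSubharmonicOn h1, h3, h4⟩

/-- The positive part of a function with the sub-mean value property. -/
lemma isNonnegSubMean_max {u : ℂ → ℝ} (hu : UpperSemicontinuous u)
    (hs : ∀ z : ℂ, ∀ r : ℝ, 0 < r →
      u z ≤ (1 / (2 * π)) * ∫ θ in (0:ℝ)..(2 * π), u (z + r * Complex.exp (θ * Complex.I))) :
    IsNonnegSubMean fun z => max (u z) 0 := by
  have hm : Measurable fun z => max (u z) 0 := hu.measurable.max measurable_const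
  have hb : ∀ R, ∃ C, ∀ z : ℂ, ‖z‖ ≤ R → max (u z) 0 ≤ C := fun R => by
    obtain ⟨C, hC⟩ := (hu.upperSemicontinuousOn (Metric.closedBall (0 : ℂ) R)).bddAbove_of_isCompact
      (isCompact_closedBall 0 R)
    exact ⟨max C 0, fun z hz => max_le_max_right 0 (hC (mem_image_of_mem u (by simpa using hz)))⟩
  refine ⟨hm, fun z => le_max_right _ _, hb, fun z w => ?_⟩
  have hint : ∀ a b : ℝ, IntervalIntegrable
      (fun θ : ℝ => max (u (z + w * Complex.exp (θ * Complex.I))) 0) volume a b := fun a b => by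
    obtain ⟨C, hC⟩ := hb (‖z‖ + ‖w‖)
    refine intervalIntegrable_const (c := C) |>.mono_fun
      (hm.comp (by fun_prop : Measurable fun θ : ℝ =>
        z + w * Complex.exp (θ * Complex.I))).aestronglyMeasurable
        (Eventually.of_forall fun θ => ?_)
    beta_reduce
    rw [Real.norm_of_nonneg (le_max_right _ _)]
    refine (hC _ ((norm_add_le _ _).trans ?_)).trans (le_abs_self C)
    simp [Complex.norm_exp]
  have hnonneg : 0 ≤ ∫ θ in 0..2 * π, max (u (z + w * Complex.exp (θ * Complex.I))) 0 :=
    intervalIntegral.integral_nonneg two_pi_pos.le fun θ _ => le_max_right _ _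
  rcases le_or_gt (u z) 0 with hz | hz
  · simpa [max_eq_right hz] using hnonneg
  rw [max_eq_left hz.le]
  rcases eq_or_ne w 0 with rfl | hw
  · simp [max_eq_left hz.le]
  have h1 := hs z ‖w‖ (norm_pos_iff.2 hw)
  have h2 : 2 * π * u z ≤ ∫ θ in 0..2 * π, u (z + ‖w‖ * Complex.exp (θ * Complex.I)) := by
    have := mul_le_mul_of_nonneg_left h1 two_pi_pos.le
    rwa [← mul_assoc, mul_one_div_cancel two_pi_pos.ne', one_mul] at this
  set p : ℝ → ℝ := fun θ => u (z + ‖w‖ * Complex.exp (θ * Complex.I)) with hp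
  have hshift : ∀ θ : ℝ, u (z + w * Complex.exp (θ * Complex.I)) = p (θ + w.arg) := fun θ => by
    have : w = ‖w‖ * Complex.exp (w.arg * Complex.I) := (Complex.norm_mul_exp_arg_mul_I w).symm
    conv_lhs => rw [this]
    simp only [hp]
    push_cast
    rw [add_mul, Complex.exp_add]
    ring_nf
  have hper : Function.Periodic p (2 * π) := fun θ => by
    simp only [hp]
    push_cast
    rw [add_mul, Complex.exp_add, Complex.exp_two_pi_mul_I, mul_one]
  have h3 : ∫ θ in 0..2 * π, p θ = ∫ θ in 0..2 * π, u (z + w * Complex.exp (θ * Complex.I)) := by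
    simp only [hshift]
    rw [intervalIntegral.integral_comp_add_right, zero_add, add_comm (2 * π),
      hper.intervalIntegral_add_eq w.arg 0, zero_add]
  rw [h3] at h2
  by_cases hi : IntervalIntegrable (fun θ : ℝ => u (z + w * Complex.exp (θ * Complex.I)))
      volume 0 (2 * π)
  · exact h2.trans (intervalIntegral.integral_mono_on two_pi_pos.le hi (hint _ _)
      fun θ _ => le_max_left _ _)
  · rw [intervalIntegral.integral_undef hi] at h2
    nlinarith [two_pi_pos]

/-- A nonnegative `C²` convex function vanishing exactly on `(-∞, 0]`, dominated by the positive
part, with its first two derivatives. -/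
structure IsConvexCutoff (Ψ Ψ' Ψ'' : ℝ → ℝ) : Prop where
  hasDerivAt : ∀ x, HasDerivAt Ψ (Ψ' x) x
  hasDerivAt_deriv : ∀ x, HasDerivAt Ψ' (Ψ'' x) x
  continuous_deriv_deriv : Continuous Ψ''
  deriv_nonneg : ∀ x, 0 ≤ Ψ' x
  deriv_deriv_nonneg : ∀ x, 0 ≤ Ψ'' x
  eq_zero : ∀ x ≤ 0, Ψ x = 0 ∧ Ψ' x = 0 ∧ Ψ'' x = 0
  pos : ∀ x, 0 < x → 0 < Ψ x
  le_self : ∀ x, 0 ≤ x → Ψ x ≤ x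

lemma IsConvexCutoff.nonneg {Ψ Ψ' Ψ'' : ℝ → ℝ} (h : IsConvexCutoff Ψ Ψ' Ψ'') (x : ℝ) :
    0 ≤ Ψ x := by
  rcases le_or_gt x 0 with hx | hx
  · exact (h.eq_zero x hx).1.ge
  · exact (h.pos x hx).le

lemma IsConvexCutoff.monotone {Ψ Ψ' Ψ'' : ℝ → ℝ} (h : IsConvexCutoff Ψ Ψ' Ψ'') : Monotone Ψ :=
  monotone_of_deriv_nonneg (fun x => (h.hasDerivAt x).differentiableAt) fun x => by
    rw [(h.hasDerivAt x).deriv]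
    exact h.deriv_nonneg x

lemma exists_isConvexCutoff : ∃ Ψ Ψ' Ψ'' : ℝ → ℝ, IsConvexCutoff Ψ Ψ' Ψ'' := by
  have hcont := Real.smoothTransition.continuous
  have hdiff : ContDiff ℝ 1 Real.smoothTransition := Real.smoothTransition.contDiff (n := 1)
  have hpos : ∀ x, 0 < x → 0 < ∫ y in 0..x, Real.smoothTransition y := fun x hx =>
    intervalIntegral.intervalIntegral_pos_of_pos_on (hcont.intervalIntegrable _ _)
      (fun y hy => Real.smoothTransition.pos_of_pos hy.1) hx
  have hmono := Real.smoothTransition.monotone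
  refine ⟨fun x => ∫ y in 0..x, Real.smoothTransition y, Real.smoothTransition,
    deriv Real.smoothTransition,
    fun x => intervalIntegral.integral_hasDerivAt_right (hcont.intervalIntegrable _ _)
      hcont.stronglyMeasurable.stronglyMeasurableAtFilter hcont.continuousAt,
    fun x => (hdiff.differentiable (by norm_num) x).hasDerivAt,
    hdiff.continuous_deriv (by norm_num),
    Real.smoothTransition.nonneg, fun x => hmono.deriv_nonneg, fun x hx => ⟨?_, ?_, ?_⟩, hpos,
    fun x hx => ?_⟩
  · rw [intervalIntegral.integral_congr (g := fun _ => 0), intervalIntegral.integral_zero]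
    intro y hy
    rw [uIcc_of_ge hx] at hy
    exact Real.smoothTransition.zero_of_nonpos hy.2
  · exact Real.smoothTransition.zero_of_nonpos hx
  · have hmin : IsLocalMin Real.smoothTransition x := Eventually.of_forall fun y => by
      rw [Real.smoothTransition.zero_of_nonpos hx]
      exact Real.smoothTransition.nonneg y
    exact hmin.deriv_eq_zero
  · have := intervalIntegral.integral_mono_on hx (hcont.intervalIntegrable (μ := volume) _ _)
      (intervalIntegrable_const (c := (1 : ℝ))) fun y _ => Real.smoothTransition.le_one y
    simpa using this

lemma lintegral_ball_eq_polarExp {g : ℂ → ℝ≥0∞} (hg : Measurable g) (c : ℂ) (s : ℝ) :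
    ∫⁻ z in Metric.ball c s, g z =
      ∫⁻ r in Ioo 0 s, ENNReal.ofReal r * ∫⁻ θ in Ioo (-π) π, g (c + polarExp (Real.log r) θ) := by
  set k : ℂ → ℝ≥0∞ := fun z => (Metric.ball c s).indicator g (c + z) with hk
  have hkm : Measurable k := (hg.indicator Metric.isOpen_ball.measurableSet).comp (by fun_prop)
  have h1 : ∫⁻ z in Metric.ball c s, g z = ∫⁻ z, k z := by
    rw [hk, lintegral_add_left_eq_self (fun z => (Metric.ball c s).indicator g z) c,
      lintegral_indicator Metric.isOpen_ball.measurableSet]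
  have hsymm : Continuous fun p : ℝ × ℝ => (p.1 * Complex.exp (p.2 * Complex.I) : ℂ) := by fun_prop
  have h2 : ∫⁻ z, k z = ∫⁻ p : ℝ × ℝ in Ioi 0 ×ˢ Ioo (-π) π,
      ENNReal.ofReal p.1 * k (p.1 * Complex.exp (p.2 * Complex.I)) := by
    rw [← Complex.lintegral_comp_polarCoord_symm]
    simp only [Complex.polarCoord_symm_apply, Complex.exp_mul_I, smul_eq_mul, polarCoord_target,
      Complex.ofReal_cos, Complex.ofReal_sin]
  have h3 : ∀ r ∈ Ioi (0 : ℝ),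
      ∫⁻ θ in Ioo (-π) π, ENNReal.ofReal r * k (r * Complex.exp (θ * Complex.I)) =
      (Iio s).indicator (fun r => ENNReal.ofReal r *
        ∫⁻ θ in Ioo (-π) π, g (c + polarExp (Real.log r) θ)) r := fun r hr => by
    have hr : 0 < r := hr
    have hkr : Measurable fun θ : ℝ => k (r * Complex.exp (θ * Complex.I)) :=
      hkm.comp (by fun_prop)
    rw [lintegral_const_mul _ hkr]
    by_cases hrs : r < s
    · rw [indicator_of_mem (mem_Iio.2 hrs)]
      congr 2 with θ
      simp only [hk, polarExp_log hr]
      rw [indicator_of_mem]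
      simpa [Complex.norm_exp, abs_of_pos hr] using hrs
    · rw [indicator_of_notMem (show r ∉ Iio s from hrs)]
      have : ∀ θ : ℝ, k (r * Complex.exp (θ * Complex.I)) = 0 := fun θ => by
        simp only [hk]
        rw [indicator_of_notMem]
        simpa [Complex.norm_exp, abs_of_pos hr] using hrs
      simp [this]
  have h4 : Measurable fun p : ℝ × ℝ =>
      ENNReal.ofReal p.1 * k (p.1 * Complex.exp (p.2 * Complex.I)) :=
    (ENNReal.measurable_ofReal.comp measurable_fst).mul (hkm.comp hsymm.measurable)
  rw [h1, h2, Measure.volume_eq_prod, ← Measure.prod_restrict, lintegral_prod _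
    h4.aemeasurable, setLIntegral_congr_fun measurableSet_Ioi h3,
    lintegral_indicator measurableSet_Iio, Measure.restrict_restrict measurableSet_Iio,
    inter_comm, Ioi_inter_Iio]

lemma lintegral_Ioo_ofReal {s : ℝ} (hs : 0 ≤ s) :
    ∫⁻ r in Ioo 0 s, ENNReal.ofReal r = ENNReal.ofReal (s ^ 2 / 2) := by
  rw [← ofReal_integral_eq_lintegral_ofReal, ← integral_Ioc_eq_integral_Ioo,
    ← intervalIntegral.integral_of_le hs, integral_id]
  · simp
  · exact (continuous_id.integrableOn_Icc (a := 0) (b := s)).mono_set Ioo_subset_Icc_self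
  · filter_upwards [ae_restrict_mem measurableSet_Ioo] with r hr using hr.1.le

lemma lintegral_polarExp_eq_ofReal {f : ℂ → ℝ} {c : ℂ} {t : ℝ}
    (hf : Continuous fun θ => f (c + polarExp t θ)) (h0 : ∀ θ, 0 ≤ f (c + polarExp t θ)) :
    ∫⁻ θ in Ioo (-π) π, ENNReal.ofReal (f (c + polarExp t θ)) =
      ENNReal.ofReal (∫ θ in 0..2 * π, f (c + polarExp t θ)) := by
  have hper : Function.Periodic (fun θ => f (c + polarExp t θ)) (2 * π) := fun θ => by
    simp only [periodic_polarExp t θ]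
  rw [← ofReal_integral_eq_lintegral_ofReal
      ((hf.integrableOn_Icc (a := -π) (b := π)).mono_set Ioo_subset_Icc_self)
      (Eventually.of_forall h0), ← integral_Ioc_eq_integral_Ioo,
    ← intervalIntegral.integral_of_le (by linarith [pi_pos])]
  have := hper.intervalIntegral_add_eq 0 (-π)
  rw [zero_add, show -π + 2 * π = π by ring] at this
  rw [this]

namespace IsSmoothSubharmonicOn

variable {B : Set ℂ} {W : ℂ → ℝ} {G : ℂ → ℂ →L[ℝ] ℝ} {H : ℂ → ℂ →L[ℝ] ℂ →L[ℝ] ℝ}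

/-- The value at an interior point bounds circle means from below. -/
lemma mul_le_mean {R : ℝ} (h : IsSmoothSubharmonicOn (Metric.ball 0 R) W G H)
    (h0 : ∀ z ∈ Metric.ball 0 R, 0 ≤ W z) {z₀ : ℂ} {s r₀ : ℝ} (hs : 0 < s)
    (hsr : ‖z₀‖ + s ≤ r₀) (hr : r₀ < R) :
    2 * π * (s / r₀) ^ 2 * W z₀ ≤ ∫ θ in 0..2 * π, W (polarExp (Real.log r₀) θ) := by
  have hr₀ : 0 < r₀ := by linarith [norm_nonneg z₀]
  have hmem : ∀ {c : ℂ} {r : ℝ}, 0 < r → ‖c‖ + r < R → ∀ θ,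
      c + polarExp (Real.log r) θ ∈ Metric.ball 0 R := fun {c r} hr0 hcr θ => by
    rw [mem_ball_zero_iff]
    refine (norm_add_le _ _).trans_lt ?_
    rwa [norm_polarExp, Real.exp_log hr0]
  set g : ℂ → ℝ≥0∞ := (Metric.ball 0 R).indicator fun z => ENNReal.ofReal (W z) with hg
  have hgm : Measurable g := by
    refine (ENNReal.continuous_ofReal.comp_continuousOn h.continuousOn).measurable_piecewise
      (g := 0) continuousOn_const Metric.isOpen_ball.measurableSet
  have hslice : ∀ {c : ℂ} {r : ℝ}, 0 < r → ‖c‖ + r < R →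
      ∫⁻ θ in Ioo (-π) π, g (c + polarExp (Real.log r) θ) =
        ENNReal.ofReal (∫ θ in 0..2 * π, W (c + polarExp (Real.log r) θ)) := fun {c r} hr0 hcr => by
    rw [← lintegral_polarExp_eq_ofReal _ fun θ => h0 _ (hmem hr0 hcr θ)]
    · exact lintegral_congr fun θ => by simp only [hg, indicator_of_mem (hmem hr0 hcr θ)]
    · exact h.continuousOn.comp_continuous (continuous_const.add
        (continuous_polarExp.comp (by fun_prop : Continuous fun θ : ℝ => (Real.log r, θ))))
        (hmem hr0 hcr)
  have hz₀ : z₀ ∈ Metric.ball 0 R := by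
    rw [mem_ball_zero_iff]
    linarith
  have hlow : ENNReal.ofReal (s ^ 2 / 2) * ENNReal.ofReal (2 * π * W z₀) ≤
      ∫⁻ z in Metric.ball z₀ s, g z := by
    rw [lintegral_ball_eq_polarExp hgm, ← lintegral_Ioo_ofReal hs.le,
      ← lintegral_mul_const _ ENNReal.measurable_ofReal]
    refine setLIntegral_mono' measurableSet_Ioo fun r hr' => ?_
    rw [hslice hr'.1 (by linarith [hr'.2])]
    gcongr
    refine h.le_mean hz₀ (b := Real.log s) (fun t ht θ => ?_) (Real.log_lt_log hr'.1 hr'.2)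
    rw [← Real.log_exp t]
    refine hmem (Real.exp_pos t) ?_ θ
    have := (Real.lt_log_iff_exp_lt hs).1 ht
    linarith
  have hup : ∫⁻ z in Metric.ball 0 r₀, g z ≤ ENNReal.ofReal (r₀ ^ 2 / 2) *
      ENNReal.ofReal (∫ θ in 0..2 * π, W (polarExp (Real.log r₀) θ)) := by
    rw [lintegral_ball_eq_polarExp hgm, ← lintegral_Ioo_ofReal hr₀.le,
      ← lintegral_mul_const _ ENNReal.measurable_ofReal]
    refine setLIntegral_mono' measurableSet_Ioo fun r hr' => ?_
    rw [hslice hr'.1 (by simpa using hr'.2.trans hr)]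
    gcongr
    have := h.mean_mono (c := 0) (by simpa using hr₀.trans hr) (b := Real.log R) (fun t ht θ => ?_)
      (mem_Iio.2 (Real.log_lt_log hr'.1 (hr'.2.trans hr)))
      (mem_Iio.2 (Real.log_lt_log hr₀ hr)) (Real.log_le_log hr'.1 hr'.2.le)
    · simpa using this
    · rw [← Real.log_exp t]
      refine hmem (Real.exp_pos t) ?_ θ
      simpa using (Real.lt_log_iff_exp_lt (hr₀.trans hr)).1 ht
  have hsub : Metric.ball z₀ s ⊆ Metric.ball 0 r₀ :=
    Metric.ball_subset_ball' (by simpa [add_comm] using hsr)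
  have hall := (hlow.trans (lintegral_mono_set hsub)).trans hup
  have hmean : 0 ≤ ∫ θ in 0..2 * π, W (polarExp (Real.log r₀) θ) :=
    intervalIntegral.integral_nonneg two_pi_pos.le fun θ _ => h0 _ (by
      simpa using hmem (c := 0) hr₀ (by simpa using hr) θ)
  rw [← ENNReal.ofReal_mul (by positivity), ← ENNReal.ofReal_mul (by positivity),
    ENNReal.ofReal_le_ofReal_iff (by positivity)] at hall
  rw [div_pow, mul_div_assoc', div_mul_eq_mul_div, div_le_iff₀ (by positivity)]
  linarith

/-- The square of a nonnegative smooth subharmonic function is smooth subharmonic. -/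
lemma exists_sq (h : IsSmoothSubharmonicOn B W G H) (h0 : ∀ z ∈ B, 0 ≤ W z) :
    ∃ G' H', IsSmoothSubharmonicOn B (fun z => W z ^ 2) G' H' :=
  ⟨_, _, h.comp_convex (Ψ := fun x => x ^ 2) (Ψ' := fun x => 2 * x) (Ψ'' := fun _ => 2)
    (fun x => by simpa using hasDerivAt_pow 2 x)
    (fun x => by simpa using (hasDerivAt_id x).const_mul (2 : ℝ)) continuous_const
    (fun _ => zero_le_two) fun z hz => mul_nonneg zero_le_two (h0 z hz)⟩

end IsSmoothSubharmonicOn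

lemma isPreconnected_iInter_of_antitone {X : Type*} [TopologicalSpace X] [T2Space X]
    {A : ℕ → Set X} (hA : Antitone A) (hc : ∀ n, IsCompact (A n)) (hp : ∀ n, IsPreconnected (A n)) :
    IsPreconnected (⋂ n, A n) := by
  have hI : IsCompact (⋂ n, A n) :=
    (hc 0).of_isClosed_subset (isClosed_iInter fun n => (hc n).isClosed) (iInter_subset _ _)
  rw [isPreconnected_closed_iff]
  intro t t' ht ht' hsub ⟨x, hxA, hxt⟩ ⟨y, hyA, hyt⟩
  by_contra hne
  have hdisj : Disjoint ((⋂ n, A n) ∩ t) ((⋂ n, A n) ∩ t') :=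
    disjoint_left.2 fun z hz hz' => hne ⟨z, hz.1, hz.2, hz'.2⟩
  obtain ⟨U, U', hU, hU', hUt, hUt', hUU'⟩ :=
    SeparatedNhds.of_isCompact_isCompact (hI.inter_right ht) (hI.inter_right ht') hdisj
  obtain ⟨i, hi⟩ := exists_subset_nhds_of_isCompact (U := U ∪ U') hA.directed_ge hc fun z hz =>
    (hU.union hU').mem_nhds ((hsub hz).imp (fun h => hUt ⟨hz, h⟩) fun h => hUt' ⟨hz, h⟩)
  obtain ⟨z, -, hz, hz'⟩ := hp i U U' hU hU' hi ⟨x, mem_iInter.1 hxA i, hUt ⟨hxA, hxt⟩⟩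
    ⟨y, mem_iInter.1 hyA i, hUt' ⟨hyA, hyt⟩⟩
  exact disjoint_left.1 hUU' hz hz'

lemma notMem_of_mem_frontier_connectedComponentIn {X : Type*} [TopologicalSpace X]
    [LocallyConnectedSpace X] {U : Set X} (hU : IsOpen U) {x z : X}
    (hz : z ∈ frontier (connectedComponentIn U x)) : z ∉ U := by
  intro hzU
  rw [hU.connectedComponentIn.frontier_eq] at hz
  obtain ⟨y, hy, hy'⟩ := mem_closure_iff.1 hz.1 _ (hU.connectedComponentIn (x := z))
    (mem_connectedComponentIn hzU)
  exact hz.2 (by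
    rw [connectedComponentIn_eq hy', ← connectedComponentIn_eq hy]
    exact mem_connectedComponentIn hzU)

/-- The component of `z₀` in the part of the superlevel set `{δ < f}` inside a disc. -/
def superlevelComponent (f : ℂ → ℝ) (δ R : ℝ) (z₀ : ℂ) : Set ℂ :=
  connectedComponentIn ({z | δ < f z} ∩ Metric.ball 0 R) z₀

lemma superlevelComponent_subset {f : ℂ → ℝ} {δ R : ℝ} {z₀ : ℂ} :
    superlevelComponent f δ R z₀ ⊆ {z | δ < f z} ∩ Metric.ball 0 R :=
  connectedComponentIn_subset _ _

/-- Cutting off a smooth subharmonic function outside a superlevel component. -/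
lemma IsSmoothSubharmonicOn.exists_cutoff {f : ℂ → ℝ} {G : ℂ → ℂ →L[ℝ] ℝ}
    {H : ℂ → ℂ →L[ℝ] ℂ →L[ℝ] ℝ} (h : IsSmoothSubharmonicOn univ f G H) {Ψ Ψ' Ψ'' : ℝ → ℝ}
    (hΨ : IsConvexCutoff Ψ Ψ' Ψ'') (δ R : ℝ) (z₀ : ℂ) :
    ∃ G' H', IsSmoothSubharmonicOn (Metric.ball 0 R)
      ((superlevelComponent f δ R z₀).indicator fun z => Ψ (f z - δ)) G' H' := by
  have hf : Continuous f := continuousOn_univ.1 h.continuousOn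
  have hopen : IsOpen ({z | δ < f z} ∩ Metric.ball 0 R) :=
    (isOpen_lt continuous_const hf).inter Metric.isOpen_ball
  have hcomp := (h.comp_convex (Ψ := fun x => Ψ (x - δ)) (Ψ' := fun x => Ψ' (x - δ))
    (Ψ'' := fun x => Ψ'' (x - δ)) (fun x => (hΨ.hasDerivAt (x - δ)).comp_sub_const x δ)
    (fun x => (hΨ.hasDerivAt_deriv (x - δ)).comp_sub_const x δ)
    (hΨ.continuous_deriv_deriv.comp (by fun_prop)) (fun x => hΨ.deriv_deriv_nonneg _)
    fun z _ => hΨ.deriv_nonneg _).mono (subset_univ (Metric.ball 0 R))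
  refine ⟨_, _, hcomp.indicator fun z hz hzf => ?_⟩
  have hle : f z - δ ≤ 0 := by
    by_contra! hlt
    exact notMem_of_mem_frontier_connectedComponentIn hopen hzf ⟨sub_pos.1 hlt, hz⟩
  obtain ⟨h0, h1, h2⟩ := hΨ.eq_zero _ hle
  refine ⟨h0, by simp [h1], ?_⟩
  ext w w'
  simp [h1, h2]

/-- The decreasing family of closures of unions of superlevel components. -/
def closureUnionComponents (f : ℕ → ℂ → ℝ) (δ R : ℝ) (z₀ : ℂ) (m : ℕ) : Set ℂ :=
  closure (⋃ n : {n // m ≤ n}, superlevelComponent (f n) δ R z₀)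

section closureUnionComponents

variable {f : ℕ → ℂ → ℝ} {δ R : ℝ} {z₀ : ℂ}

lemma antitone_closureUnionComponents : Antitone (closureUnionComponents f δ R z₀) := by
  intro m m' hm
  exact closure_mono (iUnion_subset fun n =>
    subset_iUnion (fun n : {n // m ≤ n} => superlevelComponent (f n) δ R z₀) ⟨n, hm.trans n.2⟩)

lemma superlevelComponent_subset_closureUnionComponents (m : ℕ) :
    superlevelComponent (f m) δ R z₀ ⊆ closureUnionComponents f δ R z₀ m :=
  (subset_iUnion (fun n : {n // m ≤ n} => superlevelComponent (f n) δ R z₀) ⟨m, le_rfl⟩).trans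
    subset_closure

lemma isCompact_closureUnionComponents (m : ℕ) :
    IsCompact (closureUnionComponents f δ R z₀ m) := by
  refine (isCompact_closedBall (0 : ℂ) R).of_isClosed_subset isClosed_closure
    (closure_minimal (iUnion_subset fun n => ?_) Metric.isClosed_closedBall)
  exact (superlevelComponent_subset.trans inter_subset_right).trans Metric.ball_subset_closedBall

/-- Smoothings of `u` recover the component of `{0 < u}` in the limit. -/
lemma iInter_closureUnionComponents_subset {u : ℂ → ℝ} (hu : UpperSemicontinuous u)
    (hδ : 0 < δ) (hz₀ : δ < u z₀) (hR : ‖z₀‖ < R) (hle : ∀ n z, u z ≤ f n z)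
    (hf : ∀ (n : ℕ) z C, (∀ y, ‖y - z‖ ≤ 1 / ((n : ℝ) + 1) → max (u y) 0 ≤ C) → f n z ≤ C) :
    ⋂ m, closureUnionComponents f δ R z₀ m ⊆ connectedComponentIn {z | 0 < u z} z₀ := by
  have hmem : ∀ n, z₀ ∈ superlevelComponent (f n) δ R z₀ := fun n =>
    mem_connectedComponentIn ⟨hz₀.trans_le (hle n z₀), by simpa using hR⟩
  refine IsPreconnected.subset_connectedComponentIn
    (isPreconnected_iInter_of_antitone antitone_closureUnionComponents
      isCompact_closureUnionComponents fun m => ?_) (mem_iInter.2 fun m =>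
      superlevelComponent_subset_closureUnionComponents m (hmem m)) fun x hx => ?_
  · exact (isPreconnected_iUnion ⟨z₀, mem_iInter.2 fun n : {n // m ≤ n} => hmem n⟩
      fun n : {n // m ≤ n} => isPreconnected_connectedComponentIn).closure
  · by_contra hux
    have hux : u x ≤ 0 := not_lt.1 hux
    obtain ⟨r, hr, hball⟩ := Metric.eventually_nhds_iff.1 (hu x (δ / 2) (by linarith))
    obtain ⟨m, hm⟩ := exists_nat_one_div_lt (half_pos hr)
    obtain ⟨y, hy, hxy⟩ := Metric.mem_closure_iff.1 (mem_iInter.1 hx m) (r / 2) (half_pos hr)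
    obtain ⟨n, hn⟩ := mem_iUnion.1 hy
    have h1 : δ < f n y := (superlevelComponent_subset hn).1
    have h2 : f n y ≤ δ / 2 := hf n y _ fun w hw => by
      refine max_le (hball ?_).le (by linarith)
      have h3 : (1 : ℝ) / ((n : ℕ) + 1) ≤ 1 / ((m : ℝ) + 1) := by
        gcongr
        exact n.2
      rw [← dist_eq_norm] at hw
      rw [dist_comm] at hxy
      linarith [dist_triangle w y x]
    linarith

end closureUnionComponents

/-- Radii whose circle is not covered by `A` and meets it in angular measure less than `a`. -/
def radiiOfSmallAngle (A : Set ℂ) (a : ℝ≥0∞) : Set ℝ :=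
  {r | (∃ θ : ℝ, (r * Complex.exp (θ * Complex.I) : ℂ) ∉ A) ∧
    volume.restrict (Ico 0 (2 * π)) {θ : ℝ | (r * Complex.exp (θ * Complex.I) : ℂ) ∈ A} < a}

lemma measurableSet_radiiOfSmallAngle {A : Set ℂ} (hA : IsClosed A) (a : ℝ≥0∞) :
    MeasurableSet (radiiOfSmallAngle A a) := by
  have h1 : IsOpen {r : ℝ | ∃ θ : ℝ, (r * Complex.exp (θ * Complex.I) : ℂ) ∉ A} := by
    rw [ofPred_exists]
    exact isOpen_iUnion fun θ => hA.isOpen_compl.preimage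
      (by fun_prop : Continuous fun r : ℝ => (r * Complex.exp (θ * Complex.I) : ℂ))
  have h2 : Measurable fun r : ℝ =>
      volume.restrict (Ico 0 (2 * π)) {θ : ℝ | (r * Complex.exp (θ * Complex.I) : ℂ) ∈ A} :=
    measurable_measure_prodMk_left (hA.measurableSet.preimage
      (by fun_prop : Measurable fun p : ℝ × ℝ => (p.1 * Complex.exp (p.2 * Complex.I) : ℂ)))
  exact h1.measurableSet.inter (measurableSet_lt h2 measurable_const)

lemma radiiOfSmallAngle_anti {A A' : Set ℂ} (h : A ⊆ A') (a : ℝ≥0∞) :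
    radiiOfSmallAngle A' a ⊆ radiiOfSmallAngle A a := by
  intro r hr
  have hsub : {θ : ℝ | (r * Complex.exp (θ * Complex.I) : ℂ) ∈ A} ⊆
      {θ : ℝ | (r * Complex.exp (θ * Complex.I) : ℂ) ∈ A'} := fun θ hθ => h hθ
  exact ⟨hr.1.imp fun θ hθ hA => hθ (h hA), (measure_mono hsub).trans_lt hr.2⟩

lemma mem_iUnion_radiiOfSmallAngle {A : ℕ → Set ℂ} (hA : Antitone A) (hc : ∀ m, IsClosed (A m))
    {D : Set ℂ} (hD : ⋂ m, A m ⊆ D) {a : ℝ≥0∞} {r : ℝ} (hr : thetaStar D r < a) :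
    r ∈ ⋃ m, radiiOfSmallAngle (A m) a := by
  have hex : ¬ ∀ θ : ℝ, (r * Complex.exp (θ * Complex.I) : ℂ) ∈ D := fun h => by
    rw [thetaStar, if_pos h] at hr
    exact not_top_lt hr
  rw [thetaStar, if_neg hex] at hr
  push Not at hex
  obtain ⟨θ, hθ⟩ := hex
  obtain ⟨m₁, hm₁⟩ := not_forall.1 fun h => hθ (hD (mem_iInter.2 h))
  set s : ℕ → Set ℝ := fun m => {θ : ℝ | (r * Complex.exp (θ * Complex.I) : ℂ) ∈ A m} with hs
  have hsm : ∀ m, MeasurableSet (s m) := fun m => (hc m).measurableSet.preimage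
    (by fun_prop : Measurable fun θ : ℝ => (r * Complex.exp (θ * Complex.I) : ℂ))
  have hanti : Antitone s := fun m m' h θ hθ => hA h hθ
  have hlim := tendsto_measure_iInter_atTop (μ := volume.restrict (Ico 0 (2 * π)))
    (fun m => (hsm m).nullMeasurableSet) hanti
    ⟨0, (measure_lt_top _ _).ne⟩
  have hlt : volume.restrict (Ico 0 (2 * π)) (⋂ m, s m) < a := by
    rw [Measure.restrict_apply (MeasurableSet.iInter hsm)]
    refine (measure_mono fun θ hθ => ?_).trans_lt hr
    exact ⟨hθ.2, hD (mem_iInter.2 fun m => mem_iInter.1 hθ.1 m)⟩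
  obtain ⟨m₂, hm₂⟩ := (hlim.eventually_lt_const hlt).exists
  refine mem_iUnion.2 ⟨max m₁ m₂, ⟨θ, fun h => hm₁ (hA (le_max_left m₁ m₂) h)⟩, ?_⟩
  exact (measure_mono (hanti (le_max_right m₁ m₂))).trans_lt hm₂

lemma setLIntegral_one_div_eq {S : Set ℝ} (hS : MeasurableSet S) {r₀ r₁ : ℝ} (hr₀ : 0 < r₀)
    (hr : r₀ ≤ r₁) : ∫⁻ t in S ∩ Icc r₀ r₁, ENNReal.ofReal (1 / t) =
      ENNReal.ofReal (∫ t in r₀..r₁, indicator S (fun t => 1 / t) t) := by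
  have hint : IntegrableOn (fun t : ℝ => 1 / t) (Ioc r₀ r₁) :=
    (ContinuousOn.integrableOn_Icc (continuousOn_const.div continuousOn_id
      fun t ht => (hr₀.trans_le ht.1).ne')).mono_set Ioc_subset_Icc_self
  have hcomm : ∀ t, ENNReal.ofReal (indicator S (fun t => 1 / t) t) =
      indicator S (fun t => ENNReal.ofReal (1 / t)) t := fun t => by
    by_cases ht : t ∈ S <;> simp [ht]
  rw [intervalIntegral.integral_of_le hr, ofReal_integral_eq_lintegral_ofReal (hint.indicator hS),
    lintegral_congr hcomm, lintegral_indicator hS, Measure.restrict_restrict hS]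
  · exact setLIntegral_congr (ae_eq_set_inter (ae_eq_refl S) Ioc_ae_eq_Icc.symm)
  · filter_upwards [ae_restrict_mem measurableSet_Ioc] with t ht
    exact indicator_apply_nonneg fun _ => one_div_nonneg.2 (hr₀.trans ht.1).le

lemma intervalIntegral_indicator_one_eq {E : Set ℝ} (hE : MeasurableSet E) {a b : ℝ}
    (hab : a ≤ b) :
    ∫ θ in a..b, indicator E (1 : ℝ → ℝ) θ = (volume.restrict (Ico a b)).real E := by
  rw [intervalIntegral.integral_of_le hab, restrict_Ico_eq_restrict_Ioc, integral_indicator_one hE]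

/-- The Carleman-type estimate for a single smooth subharmonic function, cut off outside a
superlevel component. -/
lemma IsSmoothSubharmonicOn.radial_estimate {f : ℂ → ℝ} {G : ℂ → ℂ →L[ℝ] ℝ}
    {H : ℂ → ℂ →L[ℝ] ℂ →L[ℝ] ℝ} (h : IsSmoothSubharmonicOn univ f G H) {Ψ Ψ' Ψ'' : ℝ → ℝ}
    (hΨ : IsConvexCutoff Ψ Ψ' Ψ'') {δ κ R r₀ r₁ s M k : ℝ} {z₀ : ℂ} (hδ : 0 ≤ δ) (hκ : 0 < κ)
    (hz₀ : κ + δ ≤ f z₀) (hs : 0 < s) (hsr : ‖z₀‖ + s ≤ r₀) (hr : r₀ ≤ r₁)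
    (hR : Real.exp 1 * r₁ < R) (hM0 : 0 ≤ M) (hM : ∀ z, ‖z‖ ≤ Real.exp 1 * r₁ → f z ≤ M)
    (hk : 0 < k) {A : Set ℂ} (hA : IsClosed A) (hfA : superlevelComponent f δ R z₀ ⊆ A) :
    k * ∫ r in r₀..r₁, Set.indicator (radiiOfSmallAngle A (ENNReal.ofReal (π / k)))
        (fun r => 1 / r) r ≤
      Real.log ((1 + k) * √(2 * π * M ^ 2))
        - Real.log (k * √(2 * π * (s / r₀) ^ 2 * Ψ κ ^ 2)) := by
  have hr₀ : 0 < r₀ := by linarith [norm_nonneg z₀]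
  have hr₁ : 0 < r₁ := hr₀.trans_le hr
  have hr₁R : r₁ < R := by
    nlinarith [Real.add_one_le_exp 1]
  have hRpos : 0 < R := hr₁.trans hr₁R
  obtain ⟨G', H', hW⟩ := h.exists_cutoff hΨ δ R z₀
  set W := (superlevelComponent f δ R z₀).indicator fun z => Ψ (f z - δ) with hWdef
  have hW0 : ∀ z, 0 ≤ W z := fun z => indicator_nonneg (fun _ _ => hΨ.nonneg _) z
  have hball : ∀ t < Real.log R, ∀ θ, (0 : ℂ) + polarExp t θ ∈ Metric.ball (0 : ℂ) R :=
    fun t ht θ => by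
      rw [zero_add, mem_ball_zero_iff, norm_polarExp]
      exact (Real.lt_log_iff_exp_lt hRpos).1 ht
  have hc : (0 : ℂ) ∈ Metric.ball (0 : ℂ) R := by simpa using hRpos
  have hV := hW.isPeriodicSubharmonic 0 hball
  obtain ⟨t₀, ht₀, hnear⟩ := hW.exists_near hc (Real.log R) one_pos
  simp only [zero_add] at hV hnear
  have hlog : Real.log r₁ + 1 < Real.log R := by
    rw [Real.lt_log_iff_exp_lt hRpos, Real.exp_add, Real.exp_log hr₁, mul_comm]
    exact hR
  have hslice : ∀ t < Real.log R, Continuous fun θ => W (polarExp t θ) := fun t ht =>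
    hV.cont.continuous_slice ht
  have hz₀Ω : z₀ ∈ superlevelComponent f δ R z₀ :=
    mem_connectedComponentIn ⟨by simp only [mem_ofPred_eq]; linarith, by
      rw [mem_ball_zero_iff]; linarith⟩
  have hlow : 2 * π * (s / r₀) ^ 2 * Ψ κ ^ 2 ≤
      ∫ θ in 0..2 * π, W (polarExp (Real.log r₀) θ) ^ 2 := by
    obtain ⟨G'', H'', hsq⟩ := hW.exists_sq fun z _ => hW0 z
    refine le_trans ?_ (hsq.mul_le_mean (fun z _ => sq_nonneg _) hs hsr (by linarith))
    have : Ψ κ ≤ W z₀ := by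
      rw [hWdef, indicator_of_mem hz₀Ω]
      exact hΨ.monotone (by linarith)
    have h0 := hΨ.nonneg κ
    gcongr
  have hlow0 : 0 < 2 * π * (s / r₀) ^ 2 * Ψ κ ^ 2 := by
    have := hΨ.pos κ hκ
    positivity
  have hup : ∫ θ in 0..2 * π, W (polarExp (Real.log r₁ + 1) θ) ^ 2 ≤ 2 * π * M ^ 2 := by
    have := intervalIntegral.integral_mono_on (μ := volume) two_pi_pos.le
      (((hslice _ hlog).pow 2).intervalIntegrable _ _)
      (intervalIntegrable_const (c := M ^ 2)) fun θ _ => ?_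
    · simpa using this
    · refine pow_le_pow_left₀ (hW0 _) ?_ 2
      by_cases hmem : polarExp (Real.log r₁ + 1) θ ∈ superlevelComponent f δ R z₀
      · rw [hWdef, indicator_of_mem hmem]
        have h1 := (superlevelComponent_subset hmem).1
        simp only [mem_ofPred_eq] at h1
        have h2 := hM (polarExp (Real.log r₁ + 1) θ) (by
          rw [norm_polarExp, Real.exp_add, Real.exp_log hr₁, mul_comm])
        exact (hΨ.le_self _ (by linarith)).trans (by linarith)
      · rwa [hWdef, indicator_of_notMem hmem]
  refine (hV.carleman_growth (fun t _ θ => hW0 _) (M := W 0 + 1) (t₀ := t₀)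
    (fun t ht θ => by linarith [(abs_lt.1 (hnear t ht θ)).2]) ht₀ hr₀ hr hlog
    (hlow0.trans_le hlow) hk (measurableSet_radiiOfSmallAngle hA _)
    fun r hrS hr0 hr1 => ?_).trans ?_
  · have hrpos : 0 < r := hr₀.trans_le hr0
    have hzero : ∀ θ, polarExp (Real.log r) θ ∉ A → W (polarExp (Real.log r) θ) = 0 :=
      fun θ hθ => indicator_of_notMem (fun hmem => hθ (hfA hmem)) _
    refine ⟨hrS.1.imp fun θ hθ => hzero θ (by rwa [polarExp_log hrpos]), ?_⟩
    have hE : IsOpen {θ | W (polarExp (Real.log r) θ) ≠ 0} :=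
      isOpen_ne_fun (hslice _ (Real.log_lt_log hrpos (by linarith))) continuous_const
    rw [intervalIntegral_indicator_one_eq hE.measurableSet two_pi_pos.le, mul_comm,
      ← lt_div_iff₀ hk]
    refine (ENNReal.lt_ofReal_iff_toReal_lt (measure_ne_top _ _)).1 (lt_of_le_of_lt ?_ hrS.2)
    refine measure_mono fun θ hθ => ?_
    by_contra hθA
    exact hθ (hzero θ (by rwa [polarExp_log hrpos]))
  · have h1 : 0 < ∫ θ in 0..2 * π, W (polarExp (Real.log r₁ + 1) θ) ^ 2 := by
      refine (hlow0.trans_le hlow).trans_le ?_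
      obtain ⟨G'', H'', hsq⟩ := hW.exists_sq fun z _ => hW0 z
      have := hsq.mean_mono hc hball (mem_Iio.2 (Real.log_lt_log hr₀ (by linarith)))
        (mem_Iio.2 hlog) (by linarith [Real.log_le_log hr₀ hr])
      simpa using this
    have h2 := Real.sqrt_pos.2 h1
    have h3 := Real.sqrt_pos.2 hlow0
    gcongr

/-- The Carleman-type estimate for the radii whose circles meet the component in a small angle. -/
lemma IsSubharmonic.lintegral_radii_le {u : ℂ → ℝ} (hu : IsSubharmonic u) {z₀ : ℂ}
    (hz₀ : 0 < u z₀) {r₀ k : ℝ} (hr₀ : ‖z₀‖ < r₀) (hk : 0 < k) :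
    ∃ C, ∀ r₁, r₀ ≤ r₁ → ∀ M, 0 < M → (∀ z, ‖z‖ ≤ Real.exp 1 * r₁ + 1 → u z ≤ M) →
      ENNReal.ofReal k * ∫⁻ t in {r | thetaStar (connectedComponentIn {z | 0 < u z} z₀) r <
        ENNReal.ofReal (π / k)} ∩ Icc r₀ r₁, ENNReal.ofReal (1 / t) ≤
      ENNReal.ofReal (Real.log M + C) := by
  have hr₀pos : 0 < r₀ := (norm_nonneg z₀).trans_lt hr₀
  have hv := isNonnegSubMean_max hu.1 hu.2
  obtain ⟨Ψ, Ψ', Ψ'', hΨ⟩ := exists_isConvexCutoff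
  choose f G H hf hvf hfC using fun n : ℕ =>
    hv.exists_smooth_approx (δ := 1 / ((n : ℝ) + 1)) (by positivity)
  have huf : ∀ n z, u z ≤ f n z := fun n z => (le_max_left _ _).trans (hvf n z)
  set B := Real.log (k * √(2 * π * ((r₀ - ‖z₀‖) / r₀) ^ 2 * Ψ (u z₀ / 2) ^ 2)) with hB
  refine ⟨Real.log ((1 + k) * √(2 * π)) - B, fun r₁ hr M hM huM => ?_⟩
  set R := Real.exp 1 * r₁ + 1
  have hRr : r₁ < R := by
    nlinarith [Real.add_one_le_exp 1, hr₀pos.trans_le hr]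
  set A := closureUnionComponents f (u z₀ / 2) R z₀ with hAdef
  have hAD : ⋂ m, A m ⊆ connectedComponentIn {z | 0 < u z} z₀ :=
    iInter_closureUnionComponents_subset hu.1 (half_pos hz₀) (half_lt_self hz₀)
      (by linarith) huf hfC
  set S := fun m => radiiOfSmallAngle (A m) (ENNReal.ofReal (π / k)) with hS
  have hSm : ∀ m, MeasurableSet (S m) := fun m =>
    measurableSet_radiiOfSmallAngle (isCompact_closureUnionComponents m).isClosed _
  have hSmono : Monotone S := fun m m' h =>
    radiiOfSmallAngle_anti (antitone_closureUnionComponents h) _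
  have hm : ∀ m, ENNReal.ofReal k * ∫⁻ t in S m ∩ Icc r₀ r₁, ENNReal.ofReal (1 / t) ≤
      ENNReal.ofReal (Real.log M + (Real.log ((1 + k) * √(2 * π)) - B)) := fun m => by
    rw [setLIntegral_one_div_eq (hSm m) hr₀pos hr, ← ENNReal.ofReal_mul hk.le]
    refine ENNReal.ofReal_le_ofReal (((hf m).radial_estimate hΨ (half_pos hz₀).le (half_pos hz₀)
      (by linarith [huf m z₀]) (sub_pos.2 hr₀) (by linarith) hr (lt_add_one _) hM.le
      (fun z hz => hfC m z M fun y hy => max_le (huM y ?_) hM.le) hk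
      (isCompact_closureUnionComponents m).isClosed
      (superlevelComponent_subset_closureUnionComponents m)).trans_eq ?_)
    · have h1 : (1 : ℝ) / ((m : ℝ) + 1) ≤ 1 := by
        rw [div_le_one (by positivity)]
        linarith [(Nat.cast_nonneg m : (0 : ℝ) ≤ m)]
      have h2 := norm_le_norm_add_norm_sub' y z
      linarith
    · rw [Real.sqrt_mul (by positivity) (M ^ 2), Real.sqrt_sq hM.le, ← mul_assoc,
        Real.log_mul (by positivity) hM.ne']
      ring
  have hsub : {r | thetaStar (connectedComponentIn {z | 0 < u z} z₀) r <
      ENNReal.ofReal (π / k)} ∩ Icc r₀ r₁ ⊆ ⋃ m, S m ∩ Icc r₀ r₁ := by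
    rw [← iUnion_inter]
    exact inter_subset_inter_left _ fun r hr => mem_iUnion_radiiOfSmallAngle
      antitone_closureUnionComponents (fun m => (isCompact_closureUnionComponents m).isClosed)
      hAD hr
  calc _ ≤ ENNReal.ofReal k * ∫⁻ t in ⋃ m, S m ∩ Icc r₀ r₁, ENNReal.ofReal (1 / t) := by
        gcongr
    _ = ⨆ m, ENNReal.ofReal k * ∫⁻ t in S m ∩ Icc r₀ r₁, ENNReal.ofReal (1 / t) := by
        rw [setLIntegral_iUnion_of_directed _ (Monotone.directed_le fun m m' h =>
          inter_subset_inter_left _ (hSmono h)), ENNReal.mul_iSup]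
    _ ≤ _ := iSup_le hm

/-- A subharmonic function of order less than `a` grows at most like `‖z‖ ^ a`. -/
lemma UpperSemicontinuous.exists_le_rpow_of_subharmonicOrder_lt {u : ℂ → ℝ}
    (hu : UpperSemicontinuous u) {a : ℝ} (ha : 0 < a)
    (h : subharmonicOrder u < ENNReal.ofReal a) :
    ∃ C, 0 < C ∧ ∀ z, u z ≤ C * (1 + ‖z‖) ^ a := by
  obtain ⟨N, hN⟩ := eventually_atTop.1 ((eventually_lt_of_limsup_lt h).and (eventually_gt_atTop 1))
  obtain ⟨K, hK⟩ := (hu.upperSemicontinuousOn _).bddAbove_of_isCompact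
    (isCompact_closedBall (0 : ℂ) N)
  refine ⟨max K 1, by positivity, fun z => ?_⟩
  have hpow : 1 ≤ (1 + ‖z‖) ^ a := Real.one_le_rpow (by linarith [norm_nonneg z]) ha.le
  rcases le_total ‖z‖ N with hz | hz
  · have h1 : u z ≤ K := hK ⟨z, by simpa using hz, rfl⟩
    exact (h1.trans (le_max_left _ _)).trans (le_mul_of_one_le_right (by positivity) hpow)
  · obtain ⟨hlt, h1⟩ := hN _ hz
    have hlog := Real.log_pos h1
    rw [ENNReal.ofReal_lt_ofReal_iff ha, div_lt_iff₀ hlog] at hlt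
    have hle : u z ≤ sSup (u '' Metric.sphere 0 ‖z‖) :=
      le_csSup ((hu.upperSemicontinuousOn _).bddAbove_of_isCompact (isCompact_sphere _ _))
        ⟨z, by simp, rfl⟩
    refine le_trans ?_ (le_mul_of_one_le_left (by positivity) (le_max_right K 1))
    rcases le_or_gt (sSup (u '' Metric.sphere 0 ‖z‖)) 0 with hm | hm
    · linarith
    · rw [← Real.log_rpow (by linarith), Real.log_lt_log_iff hm (by positivity)] at hlt
      refine (hle.trans hlt.le).trans ?_
      gcongr
      linarith

/-- The bound of the theorem with slack in the angle and in the order. -/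
lemma IsSubharmonic.limsup_le_of_order_lt {u : ℂ → ℝ} (hu : IsSubharmonic u) {z₀ : ℂ}
    (hz₀ : 0 < u z₀) {ε a : ℝ} (hε : 0 < ε) (ha : 0 < a)
    (h : subharmonicOrder u < ENNReal.ofReal a) {F : Set ℝ}
    (hF : F ⊆ {r | thetaStar (connectedComponentIn {z | 0 < u z} z₀) r <
      ENNReal.ofReal (ε * π)}) :
    limsup (fun R : ℝ => ENNReal.ofReal (1 / Real.log R) *
        ∫⁻ t in F ∩ Icc (1 : ℝ) R, ENNReal.ofReal (1 / t)) atTop ≤ ENNReal.ofReal (ε * a) := by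
  obtain ⟨K, hK0, hK⟩ := hu.1.exists_le_rpow_of_subharmonicOrder_lt ha h
  set r₀ := ‖z₀‖ + 1 with hr₀
  have hr₀1 : 1 ≤ r₀ := by linarith [norm_nonneg z₀]
  obtain ⟨C, hC⟩ := hu.lintegral_radii_le hz₀ (lt_add_one ‖z₀‖) (one_div_pos.2 hε)
  rw [show π / (1 / ε) = ε * π by field_simp] at hC
  have hbound : ∀ R, r₀ ≤ R → ∫⁻ t in F ∩ Icc (1 : ℝ) R, ENNReal.ofReal (1 / t) ≤
      ENNReal.ofReal (ε * a * Real.log R +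
        (Real.log r₀ + ε * (|Real.log K + C| + a * Real.log (Real.exp 1 + 2)))) := fun R hR => by
    have hR0 : 1 ≤ R := hr₀1.trans hR
    have hM : 0 < K * ((Real.exp 1 + 2) * R) ^ a := by positivity
    have h1 := hC R hR _ hM fun z hz => (hK z).trans (by
      gcongr
      linarith)
    rw [Real.log_mul hK0.ne' (by positivity), Real.log_rpow (by positivity),
      Real.log_mul (by positivity) (by positivity)] at h1
    have h2 : ∫⁻ t in F ∩ Icc r₀ R, ENNReal.ofReal (1 / t) ≤
        ENNReal.ofReal (ε * (Real.log K + a * (Real.log (Real.exp 1 + 2) + Real.log R) + C)) := by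
      rw [ENNReal.ofReal_mul hε.le]
      calc _ = ENNReal.ofReal ε * (ENNReal.ofReal (1 / ε) *
            ∫⁻ t in F ∩ Icc r₀ R, ENNReal.ofReal (1 / t)) := by
            rw [← mul_assoc, ← ENNReal.ofReal_mul hε.le, mul_one_div_cancel hε.ne',
              ENNReal.ofReal_one, one_mul]
        _ ≤ _ := by
            gcongr
            refine le_trans ?_ h1
            gcongr
    have h3 : ∫⁻ t in Icc 1 r₀, ENNReal.ofReal (1 / t) = ENNReal.ofReal (Real.log r₀) := by
      have := setLIntegral_one_div_eq MeasurableSet.univ one_pos hr₀1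
      simp only [univ_inter, indicator_univ] at this
      rw [this, integral_one_div_of_pos one_pos (by linarith), div_one]
    calc _ ≤ ∫⁻ t in Icc 1 r₀ ∪ F ∩ Icc r₀ R, ENNReal.ofReal (1 / t) := by
          refine lintegral_mono_set fun t ht => ?_
          rcases le_total t r₀ with h | h
          · exact Or.inl ⟨ht.2.1, h⟩
          · exact Or.inr ⟨ht.1, h, ht.2.2⟩
      _ ≤ _ := lintegral_union_le _ _ _
      _ ≤ _ := add_le_add h3.le h2
      _ ≤ ENNReal.ofReal (Real.log r₀) + ENNReal.ofReal (ε * a * Real.log R +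
          ε * (|Real.log K + C| + a * Real.log (Real.exp 1 + 2))) := by
          gcongr
          nlinarith [le_abs_self (Real.log K + C)]
      _ = _ := by
          rw [← ENNReal.ofReal_add (Real.log_nonneg hr₀1)]
          · ring_nf
          · have := Real.log_nonneg hR0
            have := Real.log_nonneg (show 1 ≤ Real.exp 1 + 2 by linarith [Real.exp_pos 1])
            positivity
  set L := Real.log r₀ + ε * (|Real.log K + C| + a * Real.log (Real.exp 1 + 2))
  have hlim : Tendsto (fun R => ENNReal.ofReal (ε * a + L / Real.log R)) atTop
      (𝓝 (ENNReal.ofReal (ε * a))) := by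
    refine ENNReal.tendsto_ofReal ?_
    simpa using (Real.tendsto_log_atTop.const_div_atTop L).const_add (ε * a)
  rw [← hlim.limsup_eq]
  refine limsup_le_limsup ?_
  filter_upwards [eventually_ge_atTop r₀, eventually_gt_atTop 1] with R hR hR1
  have hlog := Real.log_pos hR1
  calc _ ≤ _ := mul_le_mul_right (hbound R hR) _
    _ = _ := by
      rw [← ENNReal.ofReal_mul (by positivity)]
      congr 1
      field_simp

end

/-- Lemma 2, second part (Rossi): if `u` is subharmonic on `ℂ` of finite order, `D` is a
connected component of `{z : u(z) > 0}` and `F = {r ≥ 1 : θ*(r) ≤ επ}`, then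
`limsup_{R→∞} (1/log R) ∫_{F∩[1,R]} dt/t ≤ ε ρ(u)`. -/
theorem stmt_7 (u : ℂ → ℝ) (hu : IsSubharmonic u)
    (hfin : subharmonicOrder u < ⊤)
    (D : Set ℂ) (z₀ : ℂ) (hz₀ : 0 < u z₀)
    (hD : D = connectedComponentIn {z : ℂ | 0 < u z} z₀)
    (ε : ℝ) (hε : 0 < ε)
    (F : Set ℝ) (hF : F = {r : ℝ | 1 ≤ r ∧ thetaStar D r ≤ ENNReal.ofReal (ε * π)}) :
    Filter.limsup (fun R : ℝ =>
        ENNReal.ofReal (1 / Real.log R) *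
          ∫⁻ t in F ∩ Set.Icc (1:ℝ) R, ENNReal.ofReal (1 / t)) Filter.atTop ≤
      ENNReal.ofReal ε * subharmonicOrder u := by
  subst hD hF
  set ρ := (subharmonicOrder u).toReal with hρ
  have hρu : subharmonicOrder u = ENNReal.ofReal ρ := (ENNReal.ofReal_toReal hfin.ne).symm
  have hρ0 : 0 ≤ ρ := ENNReal.toReal_nonneg
  have hlim : Tendsto (fun s : ℝ => ENNReal.ofReal ((ε + s) * (ρ + s))) (nhdsWithin 0 (Set.Ioi 0))
      (nhds (ENNReal.ofReal ε * subharmonicOrder u)) := by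
    rw [hρu, ← ENNReal.ofReal_mul hε.le]
    have : Continuous fun s : ℝ => ENNReal.ofReal ((ε + s) * (ρ + s)) :=
      ENNReal.continuous_ofReal.comp (by fun_prop)
    simpa using (this.tendsto 0).mono_left nhdsWithin_le_nhds
  refine ge_of_tendsto hlim ?_
  filter_upwards [self_mem_nhdsWithin] with s (hs : 0 < s)
  refine hu.limsup_le_of_order_lt hz₀ (by positivity) (by positivity) ?_
    fun r hr => lt_of_le_of_lt hr.2 ?_
  · rw [hρu]
    exact (ENNReal.ofReal_lt_ofReal_iff (by positivity)).2 (lt_add_of_pos_right _ hs)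
  · refine (ENNReal.ofReal_lt_ofReal_iff (by positivity)).2 ?_
    gcongr
    exact lt_add_of_pos_right _ hs
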